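/- arXiv:1012.3541 — 2 statements merged into one kernel-verified Lean document; each statement's English description precedes it below -/
import Mathlib

section
/- Let P be a simple closed n-gon in ℝ² with n ≥ 3. Then the polygonal diameter of ext P is at most ⌈n/2⌉: any two points of the unbounded component of ℝ² \ P can be joined inside it by a polygonal path with at most ⌈n/2⌉ segments. -/
open Set Metric

abbrev Plane := EuclideanSpace ℝ (Fin 2)

/-- The `i`-th edge of the closed polygon with vertex cycle `p`. -/
def polyEdge {n : ℕ} (p : ZMod n → Plane) (i : ZMod n) : Set Plane :=
  segment ℝ (p i) (p (i + 1))

/-- The union of the edges of the closed polygon with vertex cycle `p`. -/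
def polyBody {n : ℕ} (p : ZMod n → Plane) : Set Plane :=
  ⋃ i, polyEdge p i

/-- `p` is the vertex cycle of a simple closed `n`-gon: distinct vertices,
consecutive edges meet exactly in their common endpoint, non-consecutive edges
are disjoint. -/
structure IsSimplePolygon {n : ℕ} (p : ZMod n → Plane) : Prop where
  three_le : 3 ≤ n
  inj : Function.Injective p
  consec : ∀ i : ZMod n, polyEdge p i ∩ polyEdge p (i + 1) = {p (i + 1)}
  nonconsec : ∀ i j : ZMod n, j ≠ i → j ≠ i + 1 → i ≠ j + 1 →
    polyEdge p i ∩ polyEdge p j = ∅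

/-- The union of the bounded connected components of the complement of `P`
(the Jordan interior of `P`). -/
def intP (P : Set Plane) : Set Plane :=
  {x | x ∉ P ∧ Bornology.IsBounded (connectedComponentIn Pᶜ x)}

/-- The union of the unbounded connected components of the complement of `P`
(the Jordan exterior of `P`). -/
def extP (P : Set Plane) : Set Plane :=
  {x | x ∉ P ∧ ¬ Bornology.IsBounded (connectedComponentIn Pᶜ x)}

/-- There is a polygonal path of `k` segments from `a` to `b` inside `S`. -/
def PolyPath (S : Set Plane) (a b : Plane) (k : ℕ) : Prop :=
  ∃ x : Fin (k + 1) → Plane, x 0 = a ∧ x (Fin.last k) = b ∧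
    ∀ i : Fin k, segment ℝ (x i.castSucc) (x i.succ) ⊆ S

/-- The minimal number of segments of a polygonal path from `a` to `b` in `S`. -/
noncomputable def polyDist (S : Set Plane) (a b : Plane) : ℕ :=
  sInf {k | PolyPath S a b k}

/-!
A point off the polygon sees at least two vertices, and at least three if it lies in the convex
hull. From a point seeing a vertex, one segment avoiding the polygon leads to a point seeing the
next (or the previous) vertex, so at least `min n (2 * k + 2)` vertices are visible after `k`
segments. When two points see a common vertex, the winding angle tells on which side of the polygon
each of them approaches it; if the winding angles agree, the two points lie in the same sector at
the vertex and two segments join them. As `2 * k + 2` vertices visible from `a` and three visible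
from `b` cannot be disjoint once `n ≤ 2 * k + 4`, this gives a path of `⌈n / 2⌉` segments. Two
points outside the convex hull are joined by two segments directly.
-/

open Filter Topology

namespace ClosedPolygon

/-! ### Segments -/

section Segments

variable {E : Type*} [NormedAddCommGroup E] [NormedSpace ℝ E]

theorem isCompact_segment (x y : E) : IsCompact (segment ℝ x y) := by
  rw [← convexHull_pair (𝕜 := ℝ)]
  exact (Set.toFinite {x, y}).isCompact_convexHull ℝ

theorem isOpen_setOf_disjoint_segment (a : E) {F : Set E} (hF : IsClosed F) :
    IsOpen {u | Disjoint (segment ℝ a u) F} := by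
  have hclosed : IsClosed {q : unitInterval × E | a + (q.1 : ℝ) • (q.2 - a) ∈ F} :=
    hF.preimage (by fun_prop)
  rw [← isClosed_compl_iff]
  convert isClosedMap_snd_of_compactSpace _ hclosed using 1
  ext u
  simp [segment_eq_image', Set.not_disjoint_iff]

theorem exists_mem_segment_inter_subset_singleton {F : Set E} (hF : IsClosed F) {a w : E}
    (hw : (segment ℝ a w ∩ F).Nonempty) :
    ∃ x ∈ segment ℝ a w ∩ F, segment ℝ a x ∩ F ⊆ {x} := by
  obtain ⟨x, hx, hmin⟩ := ((isCompact_segment a w).inter_right hF).exists_isMinOn hw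
    (continuous_const.dist continuous_id : Continuous (dist a)).continuousOn
  refine ⟨x, hx, fun y hy ↦ ?_⟩
  have hyw : y ∈ segment ℝ a w :=
    (convex_segment a w).segment_subset (left_mem_segment ℝ a w) hx.1 hy.1
  have hle : dist a x ≤ dist a y := hmin ⟨hyw, hy.2⟩
  have hadd := dist_add_dist_of_mem_segment hy.1
  exact dist_le_zero.1 (by linarith)

end Segments

section JoinedBySegments

variable {E : Type*} [AddCommGroup E] [Module ℝ E] {S T : Set E} {a b c : E} {k : ℕ}

/-- `a` and `b` are joined by a polygonal path of `k` segments, each contained in `S`; for `k = 0`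
this says `a = b`. It is the recursive counterpart of `PolyPath`, in an arbitrary real vector
space. -/
def JoinedBySegments (S : Set E) (a : E) : ℕ → E → Prop
  | 0, b => b = a
  | k + 1, b => ∃ c, JoinedBySegments S a k c ∧ segment ℝ c b ⊆ S

namespace JoinedBySegments

theorem cons (hab : segment ℝ a b ⊆ S) (hbc : JoinedBySegments S b k c) :
    JoinedBySegments S a (k + 1) c := by
  induction k generalizing c with
  | zero => exact ⟨a, rfl, hbc ▸ hab⟩
  | succ k ih =>
    obtain ⟨d, hbd, hdc⟩ := hbc
    exact ⟨d, ih hbd, hdc⟩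

theorem symm (h : JoinedBySegments S a k b) : JoinedBySegments S b k a := by
  induction k generalizing b with
  | zero => exact Eq.symm h
  | succ k ih =>
    obtain ⟨c, hac, hcb⟩ := h
    exact (ih hac).cons (segment_symm ℝ c b ▸ hcb)

theorem image {F : Type*} [AddCommGroup F] [Module ℝ F] (f : E →ₗ[ℝ] F)
    (h : JoinedBySegments S a k b) : JoinedBySegments (f '' S) (f a) k (f b) := by
  induction k generalizing b with
  | zero => exact congrArg f h
  | succ k ih =>
    obtain ⟨c, hac, hcb⟩ := h
    refine ⟨f c, ih hac, ?_⟩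
    rw [← f.coe_toAffineMap, ← image_segment]
    exact image_mono hcb

end JoinedBySegments

end JoinedBySegments

theorem JoinedBySegments.inConnectedComponent {E : Type*} [NormedAddCommGroup E]
    [NormedSpace ℝ E] {S : Set E} {a b : E} {k : ℕ} (h : JoinedBySegments S a k b) (ha : a ∈ S) :
    b ∈ connectedComponentIn S a ∧ JoinedBySegments (connectedComponentIn S a) a k b := by
  induction k generalizing b with
  | zero =>
    obtain rfl : b = a := h
    exact ⟨mem_connectedComponentIn ha, rfl⟩
  | succ k ih =>
    obtain ⟨c, hac, hcb⟩ := h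
    obtain ⟨hc, hac'⟩ := ih hac
    have hseg : segment ℝ c b ⊆ connectedComponentIn S a := by
      rw [connectedComponentIn_eq hc]
      exact (convex_segment c b).isPreconnected.subset_connectedComponentIn
        (left_mem_segment ℝ c b) hcb
    exact ⟨hseg (right_mem_segment ℝ c b), c, hac', hseg⟩

theorem JoinedBySegments.polyPath {S : Set Plane} {a b : Plane} {k : ℕ}
    (h : JoinedBySegments S a k b) : PolyPath S a b k := by
  induction k generalizing b with
  | zero => exact ⟨fun _ ↦ a, rfl, Eq.symm h, fun i ↦ i.elim0⟩
  | succ k ih =>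
    obtain ⟨c, hac, hcb⟩ := h
    obtain ⟨x, hx0, hxc, hx⟩ := ih hac
    refine ⟨Fin.snoc (α := fun _ ↦ Plane) x b, ?_, by simp, fun i ↦ ?_⟩
    · rw [← hx0]
      exact Fin.snoc_castSucc (α := fun _ ↦ Plane) (i := 0) ..
    · induction i using Fin.lastCases with
      | last => rwa [Fin.snoc_castSucc, Fin.succ_last, Fin.snoc_last, hxc]
      | cast i =>
        rw [Fin.snoc_castSucc, Fin.succ_castSucc, Fin.snoc_castSucc]
        exact hx i

/-! ### Closed polygons -/

section Module

variable {E : Type*} [AddCommGroup E] [Module ℝ E] {n : ℕ} {z : ZMod n → E} {y : E}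
  {i j : ZMod n}

/-- The `i`-th edge of the closed polygon with vertex cycle `z`; `polyEdge` is the case of
`Plane`. -/
def edge (z : ZMod n → E) (i : ZMod n) : Set E := segment ℝ (z i) (z (i + 1))

/-- The union of the edges of the closed polygon with vertex cycle `z`; `polyBody` is the case of
`Plane`. -/
def body (z : ZMod n → E) : Set E := ⋃ i, edge z i

/-- `z` is the vertex cycle of a simple closed polygon; `IsSimplePolygon` is the case of
`Plane`. -/
structure IsSimple (z : ZMod n → E) : Prop where
  three_le : 3 ≤ n
  inj : Function.Injective z
  consec : ∀ i, edge z i ∩ edge z (i + 1) = {z (i + 1)}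
  nonconsec : ∀ i j, j ≠ i → j ≠ i + 1 → i ≠ j + 1 → edge z i ∩ edge z j = ∅

/-- The point `y` off the polygon sees the `i`-th vertex: the segment from `y` to `z i` meets the
polygon only in `z i`. -/
def Sees (z : ZMod n → E) (y : E) (i : ZMod n) : Prop :=
  y ∉ body z ∧ segment ℝ y (z i) ∩ body z ⊆ {z i}

theorem edge_subset_body (z : ZMod n → E) (i : ZMod n) : edge z i ⊆ body z := subset_iUnion _ i

theorem mem_edge (z : ZMod n → E) (i : ZMod n) : z i ∈ edge z i := left_mem_segment ..

theorem mem_edge_sub_one (z : ZMod n → E) (i : ZMod n) : z i ∈ edge z (i - 1) := by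
  rw [edge, sub_add_cancel]
  exact right_mem_segment ..

theorem edge_sub_one (z : ZMod n → E) (i : ZMod n) :
    edge z (i - 1) = segment ℝ (z i) (z (i - 1)) := by
  rw [edge, sub_add_cancel, segment_symm]

theorem mem_body (z : ZMod n → E) (i : ZMod n) : z i ∈ body z := edge_subset_body z i (mem_edge z i)

theorem disjoint_body {S : Set E} : Disjoint S (body z) ↔ ∀ j, Disjoint S (edge z j) :=
  disjoint_iUnion_right

theorem Sees.ne (h : Sees z y i) : y ≠ z i := fun hy ↦ h.1 (hy ▸ mem_body z i)

theorem Sees.disjoint_segment_of_mem (hs : Sees z y i) {x : E} (hx : x ∈ segment ℝ y (z i))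
    (hne : x ≠ z i) : Disjoint (segment ℝ y x) (body z) := by
  rw [Set.disjoint_left]
  intro w hw hwz
  rw [mem_segment_iff_wbtw] at hx hw
  obtain rfl : w = z i := hs.2 ⟨mem_segment_iff_wbtw.2 (hx.trans_left hw), hwz⟩
  exact hne (hx.swap_right_iff.1 hw)

theorem edge_comp_neg (z : ZMod n → E) (i : ZMod n) :
    edge (fun j ↦ z (-j)) i = edge z (-i - 1) := by
  rw [edge_sub_one, edge, neg_add']

theorem body_comp_neg (z : ZMod n → E) : body (fun j ↦ z (-j)) = body z := by
  simp only [body, edge_comp_neg]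
  exact (((Equiv.neg _).trans (Equiv.subRight 1)).surjective).iUnion_comp (edge z)

namespace IsSimple

theorem neZero (h : IsSimple z) : NeZero n := ⟨by have := h.three_le; omega⟩

theorem nontrivial (h : IsSimple z) : Nontrivial (ZMod n) :=
  ZMod.nontrivial_iff.2 (by have := h.three_le; omega)

theorem apply_add_one_ne (h : IsSimple z) (i : ZMod n) : z (i + 1) ≠ z i := by
  have := h.nontrivial
  exact h.inj.ne (by simp)

theorem apply_sub_one_ne (h : IsSimple z) (i : ZMod n) : z (i - 1) ≠ z i := by
  have := h.nontrivial
  exact h.inj.ne (by simp)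

theorem edge_inter_edge_subset (h : IsSimple z) (hij : i ≠ j) :
    edge z i ∩ edge z j ⊆ {z i} ∨ edge z i ∩ edge z j ⊆ {z (i + 1)} := by
  by_cases hj : j = i + 1
  · exact .inr (hj ▸ (h.consec i).subset)
  by_cases hi : i = j + 1
  · rw [hi, inter_comm]
    exact .inl (h.consec j).subset
  · simp [h.nonconsec i j hij.symm hj hi]

theorem eq_or_eq_sub_one_of_mem_edge (h : IsSimple z) (hij : z i ∈ edge z j) :
    j = i ∨ j = i - 1 := by
  have := h.nontrivial
  by_contra! hj
  by_cases hj' : j = i + 1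
  · have := (h.consec i).subset ⟨mem_edge z i, hj' ▸ hij⟩
    exact h.apply_add_one_ne i this.symm
  · have := (h.nonconsec i j hj.1 hj' (fun hi ↦ hj.2 (eq_sub_of_add_eq hi.symm))).subset
      ⟨mem_edge z i, hij⟩
    exact this

theorem comp_neg (h : IsSimple z) : IsSimple (fun j ↦ z (-j)) where
  three_le := h.three_le
  inj := h.inj.comp neg_injective
  consec i := by
    have := h.consec (-(i + 1) - 1)
    rw [sub_add_cancel, inter_comm] at this
    rwa [edge_comp_neg, edge_comp_neg, ← neg_add']
  nonconsec i j hne hj hi := by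
    rw [edge_comp_neg, edge_comp_neg]
    refine h.nonconsec _ _ (fun heq ↦ hne ?_) (fun heq ↦ hi ?_) (fun heq ↦ hj ?_)
    · linear_combination -heq
    · linear_combination heq
    · linear_combination heq

end IsSimple

section Map

variable {F : Type*} [AddCommGroup F] [Module ℝ F]

theorem edge_map (f : E →ₗ[ℝ] F) (z : ZMod n → E) (i : ZMod n) :
    edge (fun j ↦ f (z j)) i = f '' edge z i :=
  (image_segment ℝ f.toAffineMap _ _).symm

theorem body_map (f : E →ₗ[ℝ] F) (z : ZMod n → E) : body (fun j ↦ f (z j)) = f '' body z := by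
  simp only [body, image_iUnion, edge_map]

theorem IsSimple.map {f : E →ₗ[ℝ] F} (hf : Function.Injective f) (h : IsSimple z) :
    IsSimple (fun j ↦ f (z j)) where
  three_le := h.three_le
  inj := hf.comp h.inj
  consec i := by rw [edge_map, edge_map, ← image_inter hf, h.consec, image_singleton]
  nonconsec i j hne hj hi := by
    rw [edge_map, edge_map, ← image_inter hf, h.nonconsec i j hne hj hi, image_empty]

end Map

end Module

section Topology

variable {E : Type*} [NormedAddCommGroup E] [NormedSpace ℝ E] {n : ℕ} {z : ZMod n → E}

theorem isClosed_edge (z : ZMod n → E) (i : ZMod n) : IsClosed (edge z i) :=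
  (isCompact_segment _ _).isClosed

theorem isCompact_body [NeZero n] (z : ZMod n → E) : IsCompact (body z) :=
  isCompact_iUnion fun _ ↦ isCompact_segment _ _

end Topology

/-! ### Angles and sectors -/

section Slit

variable {v x p q w : ℂ}

theorem neg_notMem_slitPlane_iff : -w ∉ Complex.slitPlane ↔ ∃ r : ℝ, 0 ≤ r ∧ w = r := by
  rw [Complex.mem_slitPlane_iff]
  constructor
  · intro h
    push Not at h
    simp only [Complex.neg_re, Complex.neg_im, neg_nonpos, neg_eq_zero] at h
    exact ⟨w.re, h.1, Complex.ext rfl h.2⟩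
  · rintro ⟨r, hr, rfl⟩
    simpa using hr

theorem mem_segment_iff_exists_ofReal_mul :
    x ∈ segment ℝ p q ↔ ∃ t ∈ Icc (0 : ℝ) 1, p + t * (q - p) = x := by
  simp only [segment_eq_image', mem_image, Complex.real_smul]

theorem neg_div_mem_slitPlane_iff (hp : p ≠ v) (hq : q ≠ v) :
    -((p - v) / (q - v)) ∈ Complex.slitPlane ↔ segment ℝ v p ∩ segment ℝ v q ⊆ {v} := by
  have hp' := sub_ne_zero.2 hp
  have hq' := sub_ne_zero.2 hq
  constructor
  · rintro hslit x ⟨hxp, hxq⟩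
    obtain ⟨s, hs, rfl⟩ := mem_segment_iff_exists_ofReal_mul.1 hxp
    obtain ⟨t, ht, hst⟩ := mem_segment_iff_exists_ofReal_mul.1 hxq
    by_contra hne
    have hs0 : (s : ℂ) ≠ 0 := by rintro h0; simp [h0] at hne
    refine neg_notMem_slitPlane_iff.2 ⟨t / s, div_nonneg ht.1 hs.1, ?_⟩ hslit
    push_cast
    field_simp
    linear_combination -hst
  · intro hinter
    by_contra hslit
    obtain ⟨r, hr, hpq⟩ := neg_notMem_slitPlane_iff.1 hslit
    rw [div_eq_iff hq'] at hpq
    have hpos : (0 : ℝ) < 1 + r := by linarith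
    have hpos' : (1 + r : ℂ) ≠ 0 := by exact_mod_cast hpos.ne'
    have hmem : v + ((1 / (1 + r) : ℝ) : ℂ) * (p - v) ∈ ({v} : Set ℂ) := by
      refine hinter ⟨mem_segment_iff_exists_ofReal_mul.2 ⟨_, ⟨by positivity, ?_⟩, rfl⟩,
        mem_segment_iff_exists_ofReal_mul.2 ⟨r / (1 + r), ⟨by positivity, ?_⟩, ?_⟩⟩
      · rw [div_le_one hpos]; linarith
      · rw [div_le_one hpos]; linarith
      · push_cast
        rw [hpq]
        ring
    simp [hp', hpos'] at hmem

theorem eventually_segment_inter_segment_subset (hp : p ≠ v) (hq : q ≠ v)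
    (h : segment ℝ v p ∩ segment ℝ v q ⊆ {v}) :
    ∀ᶠ p' in 𝓝 p, segment ℝ v p' ∩ segment ℝ v q ⊆ {v} := by
  have hcont : ContinuousAt (fun p' ↦ -((p' - v) / (q - v))) p := by fun_prop
  filter_upwards [eventually_ne_nhds hp, hcont.eventually_mem
    (Complex.isOpen_slitPlane.mem_nhds ((neg_div_mem_slitPlane_iff hp hq).2 h))] with p' hp' hslit
  exact (neg_div_mem_slitPlane_iff hp' hq).1 hslit

theorem div_mem_slitPlane_of_notMem_segment (h : x ∉ segment ℝ p q) :
    (q - x) / (p - x) ∈ Complex.slitPlane := by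
  by_contra hslit
  have hp : p - x ≠ 0 := sub_ne_zero.2 fun hp ↦ h (hp ▸ left_mem_segment ℝ p q)
  rw [← neg_neg ((q - x) / (p - x)), neg_notMem_slitPlane_iff] at hslit
  obtain ⟨r, hr, hqr⟩ := hslit
  have hpos : (0 : ℝ) < 1 + r := by linarith
  have hpos' : (1 + r : ℂ) ≠ 0 := by exact_mod_cast hpos.ne'
  rw [neg_eq_iff_eq_neg, div_eq_iff hp] at hqr
  refine h (mem_segment_iff_exists_ofReal_mul.2 ⟨1 / (1 + r), ⟨by positivity, ?_⟩, ?_⟩)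
  · rw [div_le_one hpos]; linarith
  · push_cast
    field_simp
    linear_combination hqr

end Slit

section Polar

/-- The point whose polar coordinates around `v` are `r * ‖d‖` and the angle `τ`, measured from the
direction `d`. -/
noncomputable def polar (v d : ℂ) (r τ : ℝ) : ℂ := v + r * (d * Complex.exp (τ * Complex.I))

/-- The angle from `d` to `w`, normalised to `(0, 2π]` so that a sector with first side `d` is an
interval of angles starting at `0`. -/
noncomputable def turn (d w : ℂ) : ℝ := Complex.arg (-(w / d)) + Real.pi

variable {v d w y : ℂ} {r s l α γ τ : ℝ}

theorem turn_mem_Ioc (d w : ℂ) : turn d w ∈ Ioc 0 (2 * Real.pi) := by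
  obtain ⟨hlt, hle⟩ := Complex.arg_mem_Ioc (-(w / d))
  exact ⟨by unfold turn; linarith, by unfold turn; linarith⟩

theorem turn_lt_two_pi (h : -(w / d) ∈ Complex.slitPlane) : turn d w < 2 * Real.pi := by
  have hlt := lt_of_le_of_ne (Complex.arg_le_pi _) (Complex.mem_slitPlane_iff_arg.1 h).1
  unfold turn
  linarith

theorem polar_norm_div_turn (hd : d ≠ 0) (v y : ℂ) :
    polar v d ‖(y - v) / d‖ (turn d (y - v)) = y := by
  have hpolar := Complex.norm_mul_exp_arg_mul_I (-((y - v) / d))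
  rw [norm_neg] at hpolar
  have hexp : Complex.exp (turn d (y - v) * Complex.I) =
      -Complex.exp (Complex.arg (-((y - v) / d)) * Complex.I) := by
    rw [turn, Complex.ofReal_add, add_mul, Complex.exp_add, Complex.exp_pi_mul_I, mul_neg_one]
  rw [polar, hexp]
  linear_combination -d * hpolar + (div_mul_cancel₀ (y - v) hd)

theorem polar_sub_one_zero (v w : ℂ) : polar v (w - v) 1 0 = w := by simp [polar]

theorem polar_sub_one_two_pi (v w : ℂ) : polar v (w - v) 1 (2 * Real.pi) = w := by
  simp [polar]

theorem tendsto_polar_zero (v d : ℂ) (τ : ℝ) :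
    Tendsto (fun r : ℝ ↦ polar v d r τ) (𝓝[>] 0) (𝓝 v) := by
  have hcont : Continuous (fun r : ℝ ↦ polar v d r τ) := by unfold polar; fun_prop
  simpa [polar] using (hcont.tendsto 0).mono_left nhdsWithin_le_nhds

theorem abs_arg_le_iff {δ : ℝ} (hw : 0 < w.re) (hδ : δ ∈ Ico 0 (Real.pi / 2)) :
    |Complex.arg w| ≤ δ ↔ |w.im| ≤ Real.tan δ * w.re := by
  have harg := abs_lt.1 (Complex.abs_arg_lt_pi_div_two_iff.2 (.inl hw))
  have hδ' : δ ∈ Ioo (-(Real.pi / 2)) (Real.pi / 2) := ⟨by linarith [hδ.1, hδ.2], hδ.2⟩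
  have hnegδ : -δ ∈ Ioo (-(Real.pi / 2)) (Real.pi / 2) := ⟨by linarith [hδ.2], by linarith [hδ'.1]⟩
  rw [abs_le, abs_le, ← Real.strictMonoOn_tan.le_iff_le hnegδ harg,
    ← Real.strictMonoOn_tan.le_iff_le harg hδ', Real.tan_neg, Complex.tan_arg, le_div_iff₀ hw,
    div_le_iff₀ hw, neg_mul]

theorem convex_setOf_abs_arg_le {δ : ℝ} (hδ : δ ∈ Ico 0 (Real.pi / 2)) :
    Convex ℝ {w : ℂ | 0 < w.re ∧ |Complex.arg w| ≤ δ} := by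
  have hconv : ConvexOn ℝ univ fun w : ℂ ↦ |w.im| - Real.tan δ * w.re :=
    ((convexOn_univ_norm (E := ℝ)).comp_linearMap Complex.imLm).sub
      ((Real.tan δ • Complex.reLm).concaveOn convex_univ)
  have heq : {w : ℂ | 0 < w.re ∧ |Complex.arg w| ≤ δ} =
      {w : ℂ | 0 < Complex.reLm w} ∩ {w ∈ univ | |w.im| - Real.tan δ * w.re ≤ 0} := by
    ext w
    simpa using fun hw ↦ abs_arg_le_iff hw hδ
  rw [heq]
  exact (convex_halfSpace_gt Complex.reLm.isLinear 0).inter (hconv.convex_le 0)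

theorem mul_exp_mem_setOf_abs_arg_le (hr : 0 < r) (hτ : |τ| < Real.pi / 2) :
    (r : ℂ) * Complex.exp (τ * Complex.I) ∈ {w : ℂ | 0 < w.re ∧ |Complex.arg w| ≤ |τ|} := by
  have hτ' := abs_lt.1 hτ
  constructor
  · rw [Complex.re_ofReal_mul, Complex.exp_ofReal_mul_I_re]
    exact mul_pos hr (Real.cos_pos_of_mem_Ioo hτ')
  · rw [Complex.exp_mul_I, Complex.arg_mul_cos_add_sin_mul_I hr
      ⟨by linarith [Real.pi_pos], by linarith [Real.pi_pos]⟩]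

-- Rotating the bisector of the two angles onto the positive real axis turns the sector into the
-- convex set `|arg| ≤ |γ - α| / 2`.
theorem exists_polar_eq_of_mem_segment (hr : 0 < r) (hs : 0 < s) (hαγ : |γ - α| < Real.pi)
    (hw : w ∈ segment ℝ (polar v d r α) (polar v d s γ)) :
    ∃ ρ > 0, ∃ β ∈ uIcc α γ, polar v d ρ β = w := by
  set m := (α + γ) / 2 with hm
  have hα : |α - m| = |γ - α| / 2 := by
    rw [hm, show α - (α + γ) / 2 = -((γ - α) / 2) by ring, abs_neg, abs_div, abs_two]
  have hγ : |γ - m| = |γ - α| / 2 := by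
    rw [hm, show γ - (α + γ) / 2 = (γ - α) / 2 by ring, abs_div, abs_two]
  have hrot : ∀ ρ β : ℝ, polar v d ρ β =
      v + d * Complex.exp (m * Complex.I) * (ρ * Complex.exp ((β - m : ℝ) * Complex.I)) := by
    intro ρ β
    rw [polar, show (β : ℂ) * Complex.I = m * Complex.I + (β - m : ℝ) * Complex.I by
      push_cast; ring, Complex.exp_add]
    ring
  obtain ⟨a, b, ha, hb, hab, rfl⟩ := hw
  have hsector := convex_setOf_abs_arg_le (δ := |γ - α| / 2) ⟨by positivity, by linarith⟩
    (hα ▸ mul_exp_mem_setOf_abs_arg_le hr (by linarith))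
    (hγ ▸ mul_exp_mem_setOf_abs_arg_le hs (by linarith)) ha hb hab
  set u := a • ((r : ℂ) * Complex.exp ((α - m : ℝ) * Complex.I)) +
    b • ((s : ℂ) * Complex.exp ((γ - m : ℝ) * Complex.I)) with hu
  have hab' : (a + b : ℂ) = 1 := by exact_mod_cast hab
  have hu0 : u ≠ 0 := fun h0 ↦ by simp [h0] at hsector
  refine ⟨‖u‖, norm_pos_iff.2 hu0, m + Complex.arg u, ?_, ?_⟩
  · have := abs_le.1 hsector.2
    rw [mem_uIcc]
    rcases abs_cases (γ - α) with h | h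
    · exact .inl ⟨by linarith, by linarith⟩
    · exact .inr ⟨by linarith, by linarith⟩
  · rw [hrot, hrot, hrot, add_sub_cancel_left, Complex.norm_mul_exp_arg_mul_I, hu]
    simp only [Complex.real_smul]
    linear_combination -v * hab'

theorem disjoint_segment_polar (hd : d ≠ 0) (hr : 0 < r) (hs : 0 < s) (hl : 0 ≤ l)
    (hαγ : |γ - α| < Real.pi) (hτ : τ ∉ uIcc α γ)
    (hsub : uIcc α γ ⊆ Ioo (τ - 2 * Real.pi) (τ + 2 * Real.pi)) :
    Disjoint (segment ℝ (polar v d r α) (polar v d s γ)) (segment ℝ v (polar v d l τ)) := by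
  rw [Set.disjoint_left]
  intro w hw hwl
  obtain ⟨ρ, hρ, β, hβ, rfl⟩ := exists_polar_eq_of_mem_segment hr hs hαγ hw
  obtain ⟨t, ht, heq⟩ := mem_segment_iff_exists_ofReal_mul.1 hwl
  have hexp : (t * l : ℝ) * Complex.exp (τ * Complex.I) = ρ * Complex.exp (β * Complex.I) := by
    refine mul_left_cancel₀ hd ?_
    simp only [polar] at heq
    push_cast
    linear_combination heq
  have hradius : t * l = ρ := by
    simpa [Complex.norm_exp_ofReal_mul_I, abs_of_nonneg ht.1, abs_of_nonneg hl, abs_of_pos hρ]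
      using congrArg norm hexp
  rw [hradius, mul_right_inj' (by exact_mod_cast hρ.ne'),
    Complex.exp_eq_exp_iff_exists_int] at hexp
  obtain ⟨k, hk⟩ := hexp
  have hτβ : τ = β + k * (2 * Real.pi) := by
    have : (τ : ℂ) = β + k * (2 * Real.pi) :=
      mul_right_cancel₀ Complex.I_ne_zero (by linear_combination hk)
    exact_mod_cast this
  obtain ⟨hlt, hgt⟩ := hsub hβ
  have hk1 : (k : ℝ) < 1 := by nlinarith [Real.pi_pos]
  have hk2 : (-1 : ℝ) < k := by nlinarith [Real.pi_pos]
  have hk0 : k = 0 := by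
    have : k < 1 := by exact_mod_cast hk1
    have : -1 < k := by exact_mod_cast hk2
    omega
  exact hτ (by simpa [hτβ, hk0] using hβ)

end Polar

section VertexAngle

/-- The angle at the vertex `z i` from the edge towards `z (i + 1)` to the segment towards `y`. The
edge towards `z (i - 1)` separates the points around `z i` into those of smaller and those of larger
vertex angle. -/
noncomputable def vertexAngle {n : ℕ} (z : ZMod n → ℂ) (i : ZMod n) (y : ℂ) : ℝ :=
  turn (z (i + 1) - z i) (y - z i)

variable {n : ℕ} {z : ZMod n → ℂ} {i j : ZMod n} {y y' : ℂ} {γ κ : ℝ}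

theorem exists_polar_vertexAngle_eq (h : z (i + 1) ≠ z i) (hy : y ≠ z i) :
    ∃ r > 0, polar (z i) (z (i + 1) - z i) r (vertexAngle z i y) = y :=
  ⟨_, norm_pos_iff.2 (div_ne_zero (sub_ne_zero.2 hy) (sub_ne_zero.2 h)),
    polar_norm_div_turn (sub_ne_zero.2 h) _ _⟩

theorem vertexAngle_mem_Ioo (h : z (i + 1) ≠ z i) (hy : y ≠ z i)
    (hinter : segment ℝ (z i) y ∩ edge z i ⊆ {z i}) :
    vertexAngle z i y ∈ Ioo 0 (2 * Real.pi) :=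
  ⟨(turn_mem_Ioc _ _).1, turn_lt_two_pi ((neg_div_mem_slitPlane_iff hy h).2 hinter)⟩

theorem Sees.segment_inter_edge_subset (hs : Sees z y i) :
    segment ℝ (z i) y ∩ edge z j ⊆ {z i} := by
  rw [segment_symm]
  exact (inter_subset_inter_right _ (edge_subset_body z j)).trans hs.2

theorem Sees.disjoint_segment_edge (hs : Sees z y i) (h : IsSimple z) (hj : j ≠ i)
    (hj' : j ≠ i - 1) : Disjoint (segment ℝ y (z i)) (edge z j) := by
  rw [Set.disjoint_left]
  intro x hx hxj
  obtain rfl : x = z i := hs.2 ⟨hx, edge_subset_body z j hxj⟩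
  exact (h.eq_or_eq_sub_one_of_mem_edge hxj).elim hj hj'

theorem IsSimple.edge_sub_one_inter_edge (h : IsSimple z) (i : ZMod n) :
    edge z (i - 1) ∩ edge z i = {z i} := by
  simpa using h.consec (i - 1)

theorem IsSimple.vertexAngle_sub_one_mem_Ioo (h : IsSimple z) (i : ZMod n) :
    vertexAngle z i (z (i - 1)) ∈ Ioo 0 (2 * Real.pi) := by
  refine vertexAngle_mem_Ioo (h.apply_add_one_ne i) (h.apply_sub_one_ne i) ?_
  rw [← edge_sub_one, h.edge_sub_one_inter_edge]

theorem Sees.vertexAngle_mem_Ioo (hs : Sees z y i) (h : IsSimple z) :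
    vertexAngle z i y ∈ Ioo 0 (2 * Real.pi) :=
  ClosedPolygon.vertexAngle_mem_Ioo (h.apply_add_one_ne i) hs.ne hs.segment_inter_edge_subset

theorem Sees.vertexAngle_ne (hs : Sees z y i) (h : IsSimple z) :
    vertexAngle z i y ≠ vertexAngle z i (z (i - 1)) := by
  intro heq
  obtain ⟨r, hr, hry⟩ := exists_polar_vertexAngle_eq (h.apply_add_one_ne i) hs.ne
  obtain ⟨s, hs0, hsz⟩ :=
    exists_polar_vertexAngle_eq (h.apply_add_one_ne i) (h.apply_sub_one_ne i)
  have hslit := (neg_div_mem_slitPlane_iff hs.ne (h.apply_sub_one_ne i)).2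
    (edge_sub_one z i ▸ hs.segment_inter_edge_subset)
  refine neg_notMem_slitPlane_iff.2 ⟨r / s, by positivity, ?_⟩ hslit
  have hs0' : (s : ℂ) ≠ 0 := by exact_mod_cast hs0.ne'
  rw [div_eq_iff (sub_ne_zero.2 (h.apply_sub_one_ne i)), ← hry, ← hsz, heq, polar, polar]
  push_cast
  field_simp
  ring

theorem IsSimple.disjoint_segment_polar_edge_sub_one (h : IsSimple z) {r s β : ℝ} (hr : 0 < r)
    (hs : 0 < s) (hβ : β ∈ Icc 0 (2 * Real.pi)) (hγ : γ ∈ Icc 0 (2 * Real.pi))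
    (hβγ : |γ - β| < Real.pi) (hθ : vertexAngle z i (z (i - 1)) ∉ uIcc β γ) :
    Disjoint (segment ℝ (polar (z i) (z (i + 1) - z i) r β) (polar (z i) (z (i + 1) - z i) s γ))
      (edge z (i - 1)) := by
  obtain ⟨l, hl, hlz⟩ := exists_polar_vertexAngle_eq (h.apply_add_one_ne i) (h.apply_sub_one_ne i)
  obtain ⟨hθ0, hθ2⟩ := h.vertexAngle_sub_one_mem_Ioo i
  have hsub : uIcc β γ ⊆ Ioo (vertexAngle z i (z (i - 1)) - 2 * Real.pi)
      (vertexAngle z i (z (i - 1)) + 2 * Real.pi) :=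
    (uIcc_subset_Icc hβ hγ).trans fun x hx ↦ ⟨by linarith [hx.1], by linarith [hx.2]⟩
  have hdisj := disjoint_segment_polar (v := z i) (sub_ne_zero.2 (h.apply_add_one_ne i)) hr hs
    hl.le hβγ hθ hsub
  rwa [hlz, ← edge_sub_one] at hdisj

theorem Sees.eventually_disjoint_segment_body (hs : Sees z y i) (h : IsSimple z)
    (hγ : γ ∈ Ioo 0 (2 * Real.pi)) (hγy : |γ - vertexAngle z i y| < Real.pi)
    (hθ : vertexAngle z i (z (i - 1)) ∉ uIcc (vertexAngle z i y) γ) :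
    ∀ᶠ ε in 𝓝[>] (0 : ℝ),
      Disjoint (segment ℝ y (polar (z i) (z (i + 1) - z i) ε γ)) (body z) := by
  obtain ⟨r, hr, hry⟩ := exists_polar_vertexAngle_eq (h.apply_add_one_ne i) hs.ne
  have hα := hs.vertexAngle_mem_Ioo h
  have := h.neZero
  simp only [disjoint_body, eventually_all]
  intro j
  by_cases hji : j = i
  · subst hji
    have hsub : uIcc (vertexAngle z j y) γ ⊆ Ioo 0 (2 * Real.pi) :=
      ordConnected_Ioo.uIcc_subset hα hγ
    filter_upwards [self_mem_nhdsWithin] with ε hε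
    have := disjoint_segment_polar (v := z j) (d := z (j + 1) - z j) (l := 1) (τ := 0)
      (sub_ne_zero.2 (h.apply_add_one_ne j)) hr hε zero_le_one hγy (fun h0 ↦ (hsub h0).1.false)
      (hsub.trans (Ioo_subset_Ioo (by linarith [Real.pi_pos]) (by simp)))
    rwa [hry, polar_sub_one_zero] at this
  by_cases hji' : j = i - 1
  · subst hji'
    filter_upwards [self_mem_nhdsWithin] with ε hε
    have := h.disjoint_segment_polar_edge_sub_one hr hε (Ioo_subset_Icc_self hα)
      (Ioo_subset_Icc_self hγ) hγy hθ
    rwa [hry] at this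
  · exact (tendsto_polar_zero _ _ _).eventually_mem
      ((isOpen_setOf_disjoint_segment y (isClosed_edge z j)).mem_nhds
        (hs.disjoint_segment_edge h hji hji'))

theorem segment_polar_inter_edge_subset (h : z (i + 1) ≠ z i) (hγ : Real.sin γ ≠ 0) {r : ℝ}
    (hr : r ≠ 0) :
    segment ℝ (z (i + 1)) (polar (z i) (z (i + 1) - z i) r γ) ∩ edge z i ⊆ {z (i + 1)} := by
  have hd := sub_ne_zero.2 h
  have hquot : (polar (z i) (z (i + 1) - z i) r γ - z (i + 1)) / (z i - z (i + 1)) =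
      1 - r * Complex.exp (γ * Complex.I) := by
    rw [div_eq_iff (by rwa [← neg_sub, neg_ne_zero]), polar]
    ring
  have hslit : (polar (z i) (z (i + 1) - z i) r γ - z (i + 1)) / (z i - z (i + 1)) ≠ 0 ∧
      -((polar (z i) (z (i + 1) - z i) r γ - z (i + 1)) / (z i - z (i + 1))) ∈
        Complex.slitPlane := by
    have him : (r * Complex.exp (γ * Complex.I)).im ≠ 0 := by
      rw [Complex.im_ofReal_mul, Complex.exp_ofReal_mul_I_im]
      exact mul_ne_zero hr hγ
    rw [hquot]
    refine ⟨fun h0 ↦ him ?_, Complex.mem_slitPlane_iff.2 (.inr ?_)⟩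
    · rw [← sub_eq_zero.1 h0, Complex.one_im]
    · simpa using him
  rw [edge, segment_symm ℝ (z i)]
  exact (neg_div_mem_slitPlane_iff (sub_ne_zero.1 (div_ne_zero_iff.1 hslit.1).1) h.symm).1
    hslit.2

theorem IsSimple.eventually_segment_polar_inter_body_subset (h : IsSimple z)
    (hγ : γ ∈ Icc 0 (2 * Real.pi)) (hsin : Real.sin γ ≠ 0) (hκ : κ = 0 ∨ κ = 2 * Real.pi)
    (hγκ : |γ - κ| < Real.pi) (hθ : vertexAngle z i (z (i - 1)) ∉ uIcc κ γ) :
    ∀ᶠ ε in 𝓝[>] (0 : ℝ),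
      segment ℝ (z (i + 1)) (polar (z i) (z (i + 1) - z i) ε γ) ∩ body z ⊆ {z (i + 1)} := by
  have hκz : polar (z i) (z (i + 1) - z i) 1 κ = z (i + 1) := by
    rcases hκ with rfl | rfl
    exacts [polar_sub_one_zero _ _, polar_sub_one_two_pi _ _]
  have hκ' : κ ∈ Icc 0 (2 * Real.pi) := by
    rcases hκ with rfl | rfl <;> simp [Real.pi_pos.le]
  have := h.neZero
  simp only [body, inter_iUnion, iUnion_subset_iff, eventually_all]
  intro j
  by_cases hji : j = i
  · subst hji
    filter_upwards [self_mem_nhdsWithin] with ε hε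
    exact segment_polar_inter_edge_subset (h.apply_add_one_ne j) hsin (ne_of_gt hε)
  by_cases hji' : j = i - 1
  · subst hji'
    filter_upwards [self_mem_nhdsWithin] with ε hε
    have := h.disjoint_segment_polar_edge_sub_one one_pos hε hκ' hγ hγκ hθ
    rw [hκz] at this
    exact this.inter_eq.trans_subset (empty_subset _)
  by_cases hji'' : j = i + 1
  · subst hji''
    refine (tendsto_polar_zero _ _ _).eventually (eventually_segment_inter_segment_subset
      (h.apply_add_one_ne i).symm (h.apply_add_one_ne (i + 1)) ?_)
    rw [segment_symm]
    exact (h.consec i).subset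
  · have hdisj : Disjoint (segment ℝ (z (i + 1)) (z i)) (edge z j) := by
      rw [segment_symm, disjoint_iff_inter_eq_empty]
      exact h.nonconsec i j hji hji'' fun hij ↦ hji' (eq_sub_of_add_eq hij.symm)
    filter_upwards [(tendsto_polar_zero _ _ _).eventually_mem
      ((isOpen_setOf_disjoint_segment _ (isClosed_edge z j)).mem_nhds hdisj)] with ε hε
    exact (Disjoint.inter_eq hε).trans_subset (empty_subset _)

theorem Sees.exists_sees_add_one (hs : Sees z y i) (h : IsSimple z) :
    ∃ q, Disjoint (segment ℝ y q) (body z) ∧ Sees z q (i + 1) := by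
  obtain ⟨hα0, hα2⟩ := hs.vertexAngle_mem_Ioo h
  set α := vertexAngle z i y
  set θ := vertexAngle z i (z (i - 1))
  -- `q` is taken on the bisector of `α` and that copy `κ` of the direction of `z (i + 1)` which is
  -- not separated from `α` by the edge towards `z (i - 1)`.
  obtain ⟨κ, hκ, hκα⟩ : ∃ κ, (κ = 0 ∨ κ = 2 * Real.pi) ∧ θ ∉ uIcc κ α := by
    rcases (hs.vertexAngle_ne h).lt_or_gt with hlt | hgt
    · exact ⟨0, .inl rfl, fun hmem ↦ hlt.not_ge (uIcc_of_le hα0.le ▸ hmem).2⟩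
    · exact ⟨2 * Real.pi, .inr rfl, fun hmem ↦ hgt.not_ge (uIcc_of_ge hα2.le ▸ hmem).1⟩
  obtain ⟨γ, hγ, hsin, hγα, hγκ, hγmem⟩ : ∃ γ ∈ Ioo 0 (2 * Real.pi), Real.sin γ ≠ 0 ∧
      |γ - α| < Real.pi ∧ |γ - κ| < Real.pi ∧ γ ∈ uIcc κ α := by
    refine ⟨(κ + α) / 2, ?_⟩
    simp only [abs_lt, mem_uIcc]
    rcases hκ with rfl | rfl
    · refine ⟨⟨?_, ?_⟩, (Real.sin_pos_of_mem_Ioo ⟨?_, ?_⟩).ne', ⟨?_, ?_⟩, ⟨?_, ?_⟩,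
        .inl ⟨?_, ?_⟩⟩ <;> linarith
    · have hsin := Real.sin_neg_of_neg_of_neg_pi_lt (x := (2 * Real.pi + α) / 2 - 2 * Real.pi)
        (by linarith) (by linarith)
      rw [Real.sin_sub_two_pi] at hsin
      refine ⟨⟨?_, ?_⟩, hsin.ne, ⟨?_, ?_⟩, ⟨?_, ?_⟩, .inr ⟨?_, ?_⟩⟩ <;> linarith
  obtain ⟨ε, hclear, hsees⟩ := ((hs.eventually_disjoint_segment_body h hγ hγα fun hmem ↦
      hκα (uIcc_subset_uIcc right_mem_uIcc hγmem hmem)).and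
    (h.eventually_segment_polar_inter_body_subset (Ioo_subset_Icc_self hγ) hsin hκ hγκ fun hmem ↦
      hκα (uIcc_subset_uIcc left_mem_uIcc hγmem hmem))).exists
  rw [segment_symm] at hsees
  exact ⟨_, hclear, Set.disjoint_left.1 hclear (right_mem_segment ..), hsees⟩

theorem sees_comp_neg : Sees (fun j ↦ z (-j)) y i ↔ Sees z y (-i) := by
  rw [Sees, Sees, body_comp_neg]

theorem Sees.exists_sees_sub_one (hs : Sees z y i) (h : IsSimple z) :
    ∃ q, Disjoint (segment ℝ y q) (body z) ∧ Sees z q (i - 1) := by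
  have hs' : Sees (fun j ↦ z (-j)) y (-i) := by rwa [sees_comp_neg, neg_neg]
  obtain ⟨q, hclear, hq⟩ := hs'.exists_sees_add_one h.comp_neg
  rw [sees_comp_neg, neg_add, neg_neg, ← sub_eq_add_neg] at hq
  exact ⟨q, body_comp_neg z ▸ hclear, hq⟩

theorem Sees.exists_common_of_vertexAngle (hs : Sees z y i) (hs' : Sees z y' i)
    (h : IsSimple z)
    (hθ : vertexAngle z i (z (i - 1)) ∉ uIcc (vertexAngle z i y) (vertexAngle z i y')) :
    ∃ q, Disjoint (segment ℝ y q) (body z) ∧ Disjoint (segment ℝ y' q) (body z) := by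
  obtain ⟨hα0, hα2⟩ := hs.vertexAngle_mem_Ioo h
  obtain ⟨hα0', hα2'⟩ := hs'.vertexAngle_mem_Ioo h
  set α := vertexAngle z i y
  set α' := vertexAngle z i y'
  have hγ : (α + α') / 2 ∈ uIcc α α' := by
    rw [mem_uIcc]
    rcases le_total α α' with hle | hle
    · exact .inl ⟨by linarith, by linarith⟩
    · exact .inr ⟨by linarith, by linarith⟩
  have hγ' : (α + α') / 2 ∈ Ioo 0 (2 * Real.pi) := ⟨by linarith, by linarith⟩
  obtain ⟨ε, hclear, hclear'⟩ := ((hs.eventually_disjoint_segment_body h hγ'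
      (abs_lt.2 ⟨by linarith, by linarith⟩) fun hmem ↦
        hθ (uIcc_subset_uIcc left_mem_uIcc hγ hmem)).and
    (hs'.eventually_disjoint_segment_body h hγ' (abs_lt.2 ⟨by linarith, by linarith⟩) fun hmem ↦
        hθ (uIcc_subset_uIcc right_mem_uIcc hγ hmem))).exists
  exact ⟨_, hclear, hclear'⟩

end VertexAngle

/-! ### The convex hull of the vertices -/

section ConvexHull

variable {E : Type*} [NormedAddCommGroup E] [NormedSpace ℝ E]

theorem convexHull_range_subset_setOf_lt {ι : Type*} {z : ι → E} {a : E} {f : E →L[ℝ] ℝ}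
    (hf : ∀ i, f a < f (z i)) : convexHull ℝ (range z) ⊆ {x | f a < f x} := by
  refine convexHull_min ?_ (convex_halfSpace_gt f.isLinear _)
  rintro _ ⟨i, rfl⟩
  exact hf i

theorem notMem_convexHull_range_iff {ι : Type*} [Finite ι] {z : ι → E} {a : E} :
    a ∉ convexHull ℝ (range z) ↔ ∃ f : E →L[ℝ] ℝ, ∀ i, f a < f (z i) := by
  constructor
  · intro ha
    obtain ⟨f, c, hac, hcz⟩ := geometric_hahn_banach_point_closed (convex_convexHull ℝ _)
      ((finite_range z).isClosed_convexHull ℝ) ha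
    exact ⟨f, fun i ↦ hac.trans (hcz _ (subset_convexHull ℝ _ (mem_range_self i)))⟩
  · rintro ⟨f, hf⟩ ha
    exact lt_irrefl (f a) (convexHull_range_subset_setOf_lt hf ha)

theorem body_subset_convexHull {n : ℕ} (z : ZMod n → E) : body z ⊆ convexHull ℝ (range z) :=
  iUnion_subset fun _ ↦ segment_subset_convexHull (mem_range_self _) (mem_range_self _)

theorem segment_subset_compl_body {n : ℕ} {z : ZMod n → E} {f : E →L[ℝ] ℝ} {a b : E}
    (ha : ∀ i, f a < f (z i)) (hb : f b ≤ f a) : segment ℝ a b ⊆ (body z)ᶜ := by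
  intro x hx hxz
  have hle : f x ≤ f a :=
    (convex_halfSpace_le f.isLinear (f a)).segment_subset (le_refl (f a)) hb hx
  have hlt : f a < f x := convexHull_range_subset_setOf_lt ha (body_subset_convexHull z hxz)
  exact hle.not_gt hlt

theorem exists_forall_lt_map_of_forall_lt_map {ι : Type*} [Finite ι]
    (hE : 1 < Module.finrank ℝ E) {z : ι → E} {a : E} {f : E →L[ℝ] ℝ} (hf : ∀ i, f a < f (z i))
    (g : E →L[ℝ] ℝ) :
    ∃ f' : E →L[ℝ] ℝ, (∀ i, f' a < f' (z i)) ∧ ∃ w, g w = 0 ∧ f' w ≠ 0 := by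
  have : FiniteDimensional ℝ E := Module.finite_of_finrank_pos (by omega)
  obtain ⟨w, hgw, hw⟩ := (LinearMap.ker g.toLinearMap).ne_bot_iff.1
    (LinearMap.ker_ne_bot_of_finrank_lt (by simpa using hE))
  by_cases hfw : f w = 0
  · obtain ⟨h, hhw⟩ := SeparatingDual.exists_ne_zero (R := ℝ) hw
    have hcont : ∀ x, ContinuousAt (fun δ : ℝ ↦ (f + δ • h) x) 0 := fun x ↦ by
      simp only [add_apply, smul_apply, smul_eq_mul]
      fun_prop
    have hev : ∀ i, ∀ᶠ δ in 𝓝[≠] (0 : ℝ), (f + δ • h) a < (f + δ • h) (z i) := fun i ↦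
      ((hcont a).eventually_lt (hcont (z i)) (by simpa using hf i)).filter_mono nhdsWithin_le_nhds
    obtain ⟨δ, hlt, hδ⟩ := ((eventually_all.2 hev).and eventually_mem_nhdsWithin).exists
    exact ⟨f + δ • h, hlt, w, hgw, by simpa [hfw, hhw] using hδ⟩
  · exact ⟨f, hf, w, hgw, hfw⟩

theorem joinedBySegments_two_of_notMem_convexHull {n : ℕ} [NeZero n]
    (hE : 1 < Module.finrank ℝ E) {z : ZMod n → E} {a b : E} (ha : a ∉ convexHull ℝ (range z))
    (hb : b ∉ convexHull ℝ (range z)) : JoinedBySegments (body z)ᶜ a 2 b := by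
  obtain ⟨f, hf⟩ := notMem_convexHull_range_iff.1 ha
  obtain ⟨g₀, hg₀⟩ := notMem_convexHull_range_iff.1 hb
  obtain ⟨g, hg, w, hfw, hgw⟩ := exists_forall_lt_map_of_forall_lt_map hE hg₀ f
  set q := a + (g (b - a) / g w) • w with hq
  have hfq : f q = f a := by simp [hq, hfw]
  have hgq : g q = g b := by simp [hq, hgw]
  refine ⟨q, ⟨a, rfl, segment_subset_compl_body hf hfq.le⟩, ?_⟩
  rw [segment_symm]
  exact segment_subset_compl_body hg hgq.le

end ConvexHull

/-! ### The winding angle -/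

section Arg

variable {v w x y p q : ℂ}

theorem continuousAt_arg_div (h : x ∉ segment ℝ p q) :
    ContinuousAt (fun x ↦ Complex.arg ((q - x) / (p - x))) x := by
  have hp : p - x ≠ 0 := sub_ne_zero.2 fun hp ↦ h (hp ▸ left_mem_segment ℝ p q)
  exact ContinuousAt.comp (f := fun x ↦ (q - x) / (p - x))
    (Complex.continuousAt_arg (div_mem_slitPlane_of_notMem_segment h))
    (by fun_prop (disch := exact hp))

theorem arg_div_of_re_pos (hp : 0 < p.re) (hq : 0 < q.re) :
    Complex.arg (q / p) = Complex.arg q - Complex.arg p := by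
  have hp' := abs_lt.1 (Complex.abs_arg_lt_pi_div_two_iff.2 (.inl hp))
  have hq' := abs_lt.1 (Complex.abs_arg_lt_pi_div_two_iff.2 (.inl hq))
  have hp0 : p ≠ 0 := fun h0 ↦ by simp [h0] at hp
  have hq0 : q ≠ 0 := fun h0 ↦ by simp [h0] at hq
  have hinv : Complex.arg p⁻¹ = -Complex.arg p := by
    rw [Complex.arg_inv, if_neg]
    linarith
  rw [div_eq_mul_inv, Complex.arg_mul hq0 (inv_ne_zero hp0), hinv, sub_eq_add_neg]
  rw [hinv]
  constructor <;> linarith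

theorem tendsto_arg_div (hw : w ≠ v) (hslit : -((y - v) / (w - v)) ∈ Complex.slitPlane) :
    Tendsto (fun t : ℝ ↦ Complex.arg ((v - (v + t * (y - v))) / (w - (v + t * (y - v)))))
      (𝓝[>] 0) (𝓝 (Complex.arg (-((y - v) / (w - v))))) := by
  have hw' := sub_ne_zero.2 hw
  have hcont : ContinuousAt (fun t : ℝ ↦ -((y - v) / (w - (v + t * (y - v))))) 0 := by
    refine ContinuousAt.neg (ContinuousAt.div (by fun_prop) (by fun_prop) ?_)
    simpa using hw'
  have htendsto := (ContinuousAt.comp (f := fun t : ℝ ↦ -((y - v) / (w - (v + t * (y - v)))))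
    (Complex.continuousAt_arg (by simpa using hslit)) hcont).tendsto.mono_left
      (nhdsWithin_le_nhds (s := Ioi 0))
  simp only [Function.comp_apply, Complex.ofReal_zero, zero_mul, add_zero] at htendsto
  refine htendsto.congr' ?_
  filter_upwards [self_mem_nhdsWithin] with t ht
  rw [sub_add_cancel_left, neg_div, mul_div_assoc, ← mul_neg, Complex.arg_real_mul _ ht,
    Function.comp_apply]

theorem tendsto_arg_div_inv (hw : w ≠ v) (hslit : -((y - v) / (w - v)) ∈ Complex.slitPlane) :
    Tendsto (fun t : ℝ ↦ Complex.arg ((w - (v + t * (y - v))) / (v - (v + t * (y - v)))))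
      (𝓝[>] 0) (𝓝 (-Complex.arg (-((y - v) / (w - v))))) := by
  have htendsto := tendsto_arg_div hw hslit
  have hlt := lt_of_le_of_ne (Complex.arg_le_pi _) (Complex.mem_slitPlane_iff_arg.1 hslit).1
  refine htendsto.neg.congr' ?_
  filter_upwards [htendsto.eventually_lt_const hlt] with t ht
  rw [← inv_div (v - _) (w - _), Complex.arg_inv, if_neg ht.ne]

end Arg

section WindingAngle

variable {n : ℕ} [NeZero n] {z : ZMod n → ℂ} {i : ZMod n} {a x y y' : ℂ}

/-- The total angle swept by the ray from `x` along the closed polygon: `2π` times the winding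
number of the polygon around `x`. -/
noncomputable def windingAngle (z : ZMod n → ℂ) (x : ℂ) : ℝ :=
  ∑ i, Complex.arg ((z (i + 1) - x) / (z i - x))

theorem continuousOn_windingAngle (z : ZMod n → ℂ) : ContinuousOn (windingAngle z) (body z)ᶜ :=
  continuousOn_finsetSum _ fun i _ _ hx ↦
    (continuousAt_arg_div fun hxi ↦ hx (edge_subset_body z i hxi)).continuousWithinAt

theorem windingAngle_mem_zmultiples (hx : x ∉ body z) :
    windingAngle z x ∈ AddSubgroup.zmultiples (2 * Real.pi) := by
  have hne : ∀ i, z i - x ≠ 0 := fun i ↦ sub_ne_zero.2 fun hi ↦ hx (hi ▸ mem_body z i)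
  have hsum : (windingAngle z x : Real.Angle) = 0 := by
    calc (windingAngle z x : Real.Angle)
        = ∑ i, (Complex.arg ((z (i + 1) - x) / (z i - x)) : Real.Angle) :=
          map_sum Real.Angle.coeHom _ _
      _ = ∑ i, ((Complex.arg (z (i + 1) - x) : Real.Angle) - Complex.arg (z i - x)) :=
          Finset.sum_congr rfl fun i _ ↦ Complex.arg_div_coe_angle (hne _) (hne _)
      _ = 0 := by
          rw [Finset.sum_sub_distrib, sub_eq_zero]
          exact Equiv.sum_comp (Equiv.addRight (1 : ZMod n)) fun i ↦
            (Complex.arg (z i - x) : Real.Angle)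
  exact AddSubgroup.mem_zmultiples_iff.2 (Real.Angle.coe_eq_zero_iff.1 hsum)

theorem windingAngle_eq_of_isPreconnected {S : Set ℂ} (hS : IsPreconnected S)
    (hSz : S ⊆ (body z)ᶜ) (hx : x ∈ S) (hy : y ∈ S) : windingAngle z x = windingAngle z y :=
  hS.constant_of_mapsTo (T := (AddSubgroup.zmultiples (2 * Real.pi) : Set ℝ))
    ⟨inferInstanceAs (DiscreteTopology (AddSubgroup.zmultiples (2 * Real.pi)))⟩
    ((continuousOn_windingAngle z).mono hSz)
    (fun _ hw ↦ windingAngle_mem_zmultiples (hSz hw)) hx hy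

theorem windingAngle_eq_of_disjoint (h : Disjoint (segment ℝ x y) (body z)) :
    windingAngle z x = windingAngle z y :=
  windingAngle_eq_of_isPreconnected (convex_segment x y).isPreconnected
    (disjoint_left.1 h) (left_mem_segment ..) (right_mem_segment ..)

theorem windingAngle_eq_of_joinedBySegments {k : ℕ} (h : JoinedBySegments (body z)ᶜ a k y) :
    windingAngle z a = windingAngle z y := by
  induction k generalizing y with
  | zero => rw [show y = a from h]
  | succ k ih =>
    obtain ⟨x, hax, hxy⟩ := h
    rw [ih hax, windingAngle_eq_of_disjoint (disjoint_left.2 hxy)]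

theorem windingAngle_eq_zero_of_notMem_convexHull (ha : a ∉ convexHull ℝ (range z)) :
    windingAngle z a = 0 := by
  obtain ⟨f, hf⟩ := notMem_convexHull_range_iff.1 ha
  set u := (starRingEnd ℂ) ((InnerProductSpace.toDual ℝ ℂ).symm f) with hu
  have hre : ∀ w, (u * w).re = f w := fun w ↦ by
    rw [← InnerProductSpace.toDual_symm_apply, Complex.inner, mul_comm, hu]
  have hpos : ∀ i, 0 < (u * (z i - a)).re := fun i ↦ by
    rw [hre, map_sub, sub_pos]
    exact hf i
  have hu0 : u ≠ 0 := fun h0 ↦ by simpa [h0] using hpos 0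
  have hterm : ∀ i, Complex.arg ((z (i + 1) - a) / (z i - a)) =
      Complex.arg (u * (z (i + 1) - a)) - Complex.arg (u * (z i - a)) := fun i ↦ by
    rw [← arg_div_of_re_pos (hpos _) (hpos _), mul_div_mul_left _ _ hu0]
  rw [windingAngle, Finset.sum_congr rfl fun i _ ↦ hterm i, Finset.sum_sub_distrib, sub_eq_zero]
  exact Equiv.sum_comp (Equiv.addRight (1 : ZMod n)) fun i ↦ Complex.arg (u * (z i - a))

theorem windingAngle_eq_zero_of_not_isBounded {S : Set ℂ} (hS : IsPreconnected S)
    (hSz : S ⊆ (body z)ᶜ) (hunbdd : ¬Bornology.IsBounded S) (ha : a ∈ S) :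
    windingAngle z a = 0 := by
  have hbdd : Bornology.IsBounded (convexHull ℝ (range z)) :=
    isBounded_convexHull.2 (finite_range z).isBounded
  obtain ⟨y, hyS, hy⟩ := not_subset.1 fun hsub ↦ hunbdd (hbdd.subset hsub)
  rw [windingAngle_eq_of_isPreconnected hS hSz ha hyS,
    windingAngle_eq_zero_of_notMem_convexHull hy]

end WindingAngle

theorem coe_turn {d w : ℂ} (hd : d ≠ 0) (hw : w ≠ 0) :
    (turn d w : Real.Angle) = Complex.arg w - Complex.arg d := by
  rw [turn, Real.Angle.coe_add, Complex.arg_neg_coe_angle (div_ne_zero hw hd),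
    Complex.arg_div_coe_angle hw hd, add_assoc, ← Real.Angle.coe_add, ← two_mul,
    Real.Angle.coe_two_pi, add_zero]

theorem turn_eq_turn_sub_turn_add_ite {d e w : ℂ} (hd : d ≠ 0) (he : e ≠ 0) (hw : w ≠ 0) :
    turn e w = turn d w - turn d e + if turn d w ≤ turn d e then 2 * Real.pi else 0 := by
  have hangle : (turn e w : Real.Angle) = (turn d w - turn d e : ℝ) := by
    rw [Real.Angle.coe_sub, coe_turn he hw, coe_turn hd hw, coe_turn hd he]
    abel
  obtain ⟨k, hk⟩ := Real.Angle.angle_eq_iff_two_pi_dvd_sub.1 hangle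
  obtain ⟨hew, hew'⟩ := turn_mem_Ioc e w
  obtain ⟨hdw, hdw'⟩ := turn_mem_Ioc d w
  obtain ⟨hde, hde'⟩ := turn_mem_Ioc d e
  have := Real.pi_pos
  split_ifs with hle
  · obtain rfl : k = 1 := by
      have hk0 : (0 : ℝ) < k := by nlinarith
      have hk2 : (k : ℝ) < 2 := by nlinarith
      norm_cast at hk0 hk2
      omega
    push_cast at hk
    linarith
  · obtain rfl : k = 0 := by
      have hk0 : (-1 : ℝ) < k := by nlinarith
      have hk2 : (k : ℝ) < 1 := by nlinarith
      norm_cast at hk0 hk2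
      omega
    push_cast at hk
    linarith

section SeesWindingAngle

variable {n : ℕ} [NeZero n] {z : ZMod n → ℂ} {i : ZMod n} {y y' : ℂ}

theorem Sees.tendsto_windingAngle (hs : Sees z y i) (h : IsSimple z) :
    Tendsto (fun t : ℝ ↦ windingAngle z (z i + t * (y - z i))) (𝓝[>] 0)
      (𝓝 (∑ j ∈ {i - 1, i}ᶜ, Complex.arg ((z (j + 1) - z i) / (z j - z i)) +
        (Complex.arg (-((y - z i) / (z (i - 1) - z i))) -
          Complex.arg (-((y - z i) / (z (i + 1) - z i)))))) := by
  have := h.nontrivial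
  have hslit : ∀ {q : ℂ} (j : ZMod n), q ≠ z i → edge z j = segment ℝ (z i) q →
      -((y - z i) / (q - z i)) ∈ Complex.slitPlane := fun j hq hj ↦
    (neg_div_mem_slitPlane_iff hs.ne hq).2 (hj ▸ hs.segment_inter_edge_subset)
  have hsum : ∀ x, windingAngle z x =
      ∑ j ∈ {i - 1, i}ᶜ, Complex.arg ((z (j + 1) - x) / (z j - x)) +
        (Complex.arg ((z i - x) / (z (i - 1) - x)) +
          Complex.arg ((z (i + 1) - x) / (z i - x))) := fun x ↦ by
    rw [windingAngle, ← Finset.sum_compl_add_sum {i - 1, i}, Finset.sum_pair (by simp),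
      sub_add_cancel]
  have hlim : Tendsto (fun t : ℝ ↦ z i + t * (y - z i)) (𝓝[>] 0) (𝓝 (z i)) := by
    have hcont : Continuous (fun t : ℝ ↦ z i + t * (y - z i)) := by fun_prop
    simpa using (hcont.tendsto 0).mono_left nhdsWithin_le_nhds
  simp only [hsum, sub_eq_add_neg (Complex.arg _)]
  refine (tendsto_finsetSum _ fun j hj ↦ ?_).add
    ((tendsto_arg_div (h.apply_sub_one_ne i) (hslit _ (h.apply_sub_one_ne i)
      (edge_sub_one z i))).add
    (tendsto_arg_div_inv (h.apply_add_one_ne i) (hslit i (h.apply_add_one_ne i) rfl)))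
  have hzj : z i ∉ segment ℝ (z j) (z (j + 1)) := fun hmem ↦ by
    simp only [Finset.mem_compl, Finset.mem_insert, Finset.mem_singleton] at hj
    exact hj (h.eq_or_eq_sub_one_of_mem_edge hmem).symm
  exact (continuousAt_arg_div hzj).tendsto.comp hlim

theorem Sees.windingAngle_eq (hs : Sees z y i) (h : IsSimple z) :
    windingAngle z y = ∑ j ∈ {i - 1, i}ᶜ, Complex.arg ((z (j + 1) - z i) / (z j - z i)) +
      (turn (z (i - 1) - z i) (y - z i) - turn (z (i + 1) - z i) (y - z i)) := by
  rw [turn, turn, add_sub_add_right_eq_sub]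
  refine tendsto_nhds_unique (tendsto_const_nhds.congr' ?_) (hs.tendsto_windingAngle h)
  filter_upwards [Ioc_mem_nhdsGT zero_lt_one] with t ht
  refine windingAngle_eq_of_disjoint (hs.disjoint_segment_of_mem ?_ ?_)
  · rw [segment_symm]
    exact mem_segment_iff_exists_ofReal_mul.2 ⟨t, ⟨ht.1.le, ht.2⟩, rfl⟩
  · simpa using ⟨ht.1.ne', sub_ne_zero.2 hs.ne⟩

-- The winding angle jumps by `2π` across the edge towards `z (i - 1)`, so it tells on which side of
-- that edge a point seeing `z i` lies.
theorem Sees.notMem_uIcc_vertexAngle (hs : Sees z y i) (hs' : Sees z y' i) (h : IsSimple z)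
    (hw : windingAngle z y = windingAngle z y') :
    vertexAngle z i (z (i - 1)) ∉ uIcc (vertexAngle z i y) (vertexAngle z i y') := by
  have hd := sub_ne_zero.2 (h.apply_add_one_ne i)
  have he := sub_ne_zero.2 (h.apply_sub_one_ne i)
  have hturn := turn_eq_turn_sub_turn_add_ite hd he (sub_ne_zero.2 hs.ne)
  have hturn' := turn_eq_turn_sub_turn_add_ite hd he (sub_ne_zero.2 hs'.ne)
  have hα := hs.vertexAngle_ne h
  have hα' := hs'.vertexAngle_ne h
  rw [hs.windingAngle_eq h, hs'.windingAngle_eq h, hturn, hturn'] at hw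
  simp only [vertexAngle, mem_uIcc] at hα hα' ⊢
  have := Real.pi_pos
  rintro (⟨hle, hle'⟩ | ⟨hle, hle'⟩)
  · rw [if_pos hle, if_neg (lt_of_le_of_ne hle' hα'.symm).not_ge] at hw
    linarith
  · rw [if_pos hle, if_neg (lt_of_le_of_ne hle' hα.symm).not_ge] at hw
    linarith

theorem Sees.exists_common (hs : Sees z y i) (hs' : Sees z y' i) (h : IsSimple z)
    (hw : windingAngle z y = windingAngle z y') :
    ∃ q, Disjoint (segment ℝ y q) (body z) ∧ Disjoint (segment ℝ y' q) (body z) :=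
  hs.exists_common_of_vertexAngle hs' h (hs.notMem_uIcc_vertexAngle hs' h hw)

end SeesWindingAngle

/-! ### Visible vertices -/

section Sweep

variable {E : Type*} [NormedAddCommGroup E] [NormedSpace ℝ E] {a p q u w x g : E}

theorem map_lt_map_of_mem_segment {f : E →L[ℝ] ℝ} (hu : f a < f u) (hw : w ∈ segment ℝ a u)
    (hne : w ≠ a) : f a < f w := by
  rw [segment_eq_image'] at hw
  obtain ⟨t, ht, rfl⟩ := hw
  have ht0 : t ≠ 0 := by rintro rfl; simp at hne
  simpa using mul_pos (ht.1.lt_of_ne' ht0) (sub_pos.2 hu)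

theorem segment_inter_segment_subset_of_map_eq {f : E →L[ℝ] ℝ} (hpq : f p = f q) (ha : f a ≠ f p)
    (hu : u ∈ segment ℝ p q) : segment ℝ a u ∩ segment ℝ p q ⊆ {u} := by
  have hconst : ∀ {y}, y ∈ segment ℝ p q → f y = f p := by
    rintro _ ⟨s, t, -, -, hst, rfl⟩
    simp [← hpq, ← add_mul, hst]
  rintro y ⟨hya, hyp⟩
  rw [segment_eq_image'] at hya
  obtain ⟨t, -, rfl⟩ := hya
  have hft := hconst hyp
  simp only [map_add, map_smul, map_sub, hconst hu, smul_eq_mul] at hft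
  have ht : t = 1 := mul_right_cancel₀ (sub_ne_zero.2 ha.symm) (by linarith)
  simp [ht]

theorem exists_mem_segment_frequently_disjoint {F : Set E} (hF : IsClosed F)
    (hg : ¬Disjoint (segment ℝ a g) F) (x : E) :
    ∃ u ∈ segment ℝ x g, ¬Disjoint (segment ℝ a u) F ∧
      (u = x ∨ ∃ᶠ u' in 𝓝 u, Disjoint (segment ℝ a u') F) := by
  set c : ℝ → E := fun τ ↦ x + τ • (g - x) with hc
  have hcont : Continuous c := by fun_prop
  have hcompact : IsCompact (Icc 0 1 ∩ {τ | ¬Disjoint (segment ℝ a (c τ)) F}) :=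
    isCompact_Icc.inter_right
      ((isOpen_setOf_disjoint_segment a hF).preimage hcont).isClosed_compl
  obtain ⟨τ, ⟨hτ, hmeet⟩, hleast⟩ := hcompact.exists_isLeast ⟨1, ⟨by simp, by simpa [hc] using hg⟩⟩
  refine ⟨c τ, segment_eq_image' ℝ x g ▸ mem_image_of_mem c hτ, hmeet, ?_⟩
  rcases hτ.1.eq_or_lt with rfl | hpos
  · simp [hc]
  · have hlt : ∃ᶠ σ in 𝓝[<] τ, Disjoint (segment ℝ a (c σ)) F := by
      refine Eventually.frequently ?_
      filter_upwards [Ioo_mem_nhdsLT hpos] with σ hσ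
      by_contra hσF
      exact (hleast ⟨⟨hσ.1.le, hσ.2.le.trans hτ.2⟩, hσF⟩).not_gt hσ.2
    exact .inr ((hcont.tendsto τ).mono_left nhdsWithin_le_nhds |>.frequently hlt)

end Sweep

section Cross

variable {a p q u w x v : ℂ}

/-- The oriented area of the parallelogram spanned by `u` and `v`, as a functional of `v`. -/
noncomputable def cross (u : ℂ) : ℂ →L[ℝ] ℝ := u.re • Complex.imCLM - u.im • Complex.reCLM

theorem cross_apply (u v : ℂ) : cross u v = u.re * v.im - u.im * v.re := by simp [cross]

theorem cross_self (u : ℂ) : cross u u = 0 := by rw [cross_apply]; ring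

theorem cross_swap (u v : ℂ) : cross u v = -cross v u := by rw [cross_apply, cross_apply]; ring

theorem cross_cyclic (u v w : ℂ) : cross u v * w + cross v w * u + cross w u * v = 0 := by
  simp only [cross_apply]
  apply Complex.ext <;> simp <;> ring

theorem cross_eq_zero_iff (hu : u ≠ 0) : cross u v = 0 ↔ ∃ r : ℝ, v = r * u := by
  constructor
  · intro h0
    have hnorm : Complex.normSq u ≠ 0 := by simpa using hu
    rw [cross_apply] at h0
    refine ⟨(u.re * v.re + u.im * v.im) / Complex.normSq u, ?_⟩
    apply Complex.ext <;> simp only [Complex.re_ofReal_mul, Complex.im_ofReal_mul] <;>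
      rw [div_mul_eq_mul_div, eq_div_iff hnorm, Complex.normSq_apply]
    · linear_combination -u.im * h0
    · linear_combination u.re * h0
  · rintro ⟨r, rfl⟩
    rw [cross_apply, Complex.re_ofReal_mul, Complex.im_ofReal_mul]
    ring

theorem cross_ne_zero_of_inter_subset (hpq : p ≠ q) (haw : a ≠ w) (hw : w ∈ openSegment ℝ p q)
    (hinter : segment ℝ a w ∩ segment ℝ p q ⊆ {w}) : cross (q - p) (a - w) ≠ 0 := by
  have hwpq := openSegment_subset_segment ℝ p q hw
  have hqp : q - p ≠ 0 := sub_ne_zero.2 hpq.symm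
  rw [openSegment_eq_image'] at hw
  obtain ⟨t, ⟨ht0, ht1⟩, hwt⟩ := hw
  simp only [Complex.real_smul] at hwt
  rw [Ne, cross_eq_zero_iff hqp]
  rintro ⟨r, hr⟩
  have hslit : ∀ {s : ℝ} {g : ℂ}, s ≠ 0 → g - w = s * (q - p) → segment ℝ w g ⊆ segment ℝ p q →
      0 < -(r / s) := fun {s g} hs hg hsub ↦ by
    have hs' : (s : ℂ) ≠ 0 := by exact_mod_cast hs
    have hgw : g ≠ w := sub_ne_zero.1 (hg ▸ mul_ne_zero hs' hqp)
    have hmem := (neg_div_mem_slitPlane_iff haw hgw).2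
      ((inter_subset_inter_right _ hsub).trans (segment_symm ℝ w a ▸ hinter))
    rw [hr, hg, mul_div_mul_right _ _ hqp] at hmem
    rw [← Complex.ofReal_div, ← Complex.ofReal_neg] at hmem
    exact Complex.ofReal_mem_slitPlane.1 hmem
  have hp := hslit (neg_ne_zero.2 ht0.ne') (by push_cast; linear_combination hwt)
    ((convex_segment p q).segment_subset hwpq (left_mem_segment ℝ p q))
  have hq := hslit (sub_ne_zero.2 ht1.ne') (by push_cast; linear_combination hwt)
    ((convex_segment p q).segment_subset hwpq (right_mem_segment ℝ p q))
  rw [div_neg, neg_neg, div_pos_iff_of_pos_right ht0] at hp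
  exact (div_pos hp (sub_pos.2 ht1)).not_gt (neg_pos.1 hq)

theorem add_cross_div_cross_mul_eq (h : cross (q - p) (u - a) ≠ 0) :
    p + ((cross (a - p) (u - a) / cross (q - p) (u - a) : ℝ) : ℂ) * (q - p) =
      a + ((cross (a - p) (q - p) / cross (q - p) (u - a) : ℝ) : ℂ) * (u - a) := by
  have h' : (cross (q - p) (u - a) : ℂ) ≠ 0 := by exact_mod_cast h
  have hcyclic := cross_cyclic (q - p) (u - a) (a - p)
  rw [cross_swap (u - a) (a - p)] at hcyclic
  push_cast at hcyclic ⊢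
  field_simp
  linear_combination -hcyclic

-- The two segments still meet by Cramer's rule: the parameters of the intersection of the lines
-- through `a, u'` and `p, q` depend continuously on `u'`.
theorem eventually_not_disjoint_segment (hu : w ∈ openSegment ℝ a u)
    (hpq : w ∈ openSegment ℝ p q) (hcross : cross (q - p) (a - w) ≠ 0) :
    ∀ᶠ u' in 𝓝 u, ¬Disjoint (segment ℝ a u') (segment ℝ p q) := by
  simp only [openSegment_eq_image', mem_image] at hu hpq
  obtain ⟨s₀, hs₀, rfl⟩ := hu
  obtain ⟨t₀, ht₀, hst⟩ := hpq
  have hu0 : cross (q - p) (u - a) ≠ 0 := fun h0 ↦ hcross (by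
    rw [sub_add_cancel_left, map_neg, map_smul, h0, smul_zero, neg_zero])
  have hap : a - p = t₀ • (q - p) - s₀ • (u - a) := by
    rw [sub_eq_sub_iff_add_eq_add, ← hst, add_comm]
  set s : ℂ → ℝ := fun u' ↦ cross (a - p) (q - p) / cross (q - p) (u' - a)
  set t : ℂ → ℝ := fun u' ↦ cross (a - p) (u' - a) / cross (q - p) (u' - a)
  have hsu : s u = s₀ := by
    rw [div_eq_iff hu0, cross_swap, hap, map_sub, map_smul, map_smul, cross_self]
    simp
  have htu : t u = t₀ := by
    rw [div_eq_iff hu0, cross_swap, hap, map_sub, map_smul, map_smul, cross_self,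
      cross_swap (u - a), smul_eq_mul, smul_eq_mul]
    ring
  have hcont : ContinuousAt (fun u' ↦ cross (q - p) (u' - a)) u := by fun_prop
  have hscont : ContinuousAt s u := by fun_prop (disch := exact hu0)
  have htcont : ContinuousAt t u := by fun_prop (disch := exact hu0)
  filter_upwards [hcont.eventually_ne hu0,
    hscont.eventually_mem (Icc_mem_nhds (hsu ▸ hs₀.1) (hsu ▸ hs₀.2)),
    htcont.eventually_mem (Icc_mem_nhds (htu ▸ ht₀.1) (htu ▸ ht₀.2))] with u' hu' hs' ht'
  exact not_disjoint_iff.2 ⟨a + s u' * (u' - a), mem_segment_iff_exists_ofReal_mul.2 ⟨_, hs', rfl⟩,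
    mem_segment_iff_exists_ofReal_mul.2 ⟨_, ht', add_cross_div_cross_mul_eq hu'⟩⟩

end Cross

section Visible

variable {n : ℕ} {z : ZMod n → ℂ} {i j k : ZMod n} {a g w x : ℂ}

theorem mem_openSegment_of_mem_edge (hw : w ∈ edge z k) (hwz : w ∉ range z) :
    w ∈ openSegment ℝ (z k) (z (k + 1)) :=
  mem_openSegment_of_ne_left_right (fun h ↦ hwz ⟨_, h⟩) (fun h ↦ hwz ⟨_, h⟩) hw

theorem cross_ne_zero_of_visible (h : IsSimple z) (ha : a ∉ body z) (hw : w ∈ edge z k)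
    (hwz : w ∉ range z) (haw : segment ℝ a w ∩ body z ⊆ {w}) :
    cross (z (k + 1) - z k) (a - w) ≠ 0 :=
  cross_ne_zero_of_inter_subset (h.apply_add_one_ne k).symm
    (fun haw ↦ ha (haw ▸ edge_subset_body z k hw)) (mem_openSegment_of_mem_edge hw hwz)
    ((inter_subset_inter_right _ (edge_subset_body z k)).trans haw)

theorem segment_inter_edge_subset_of_visible (h : IsSimple z) (ha : a ∉ body z)
    (hx : x ∈ edge z k) (hxz : x ∉ range z) (hax : segment ℝ a x ∩ body z ⊆ {x})
    (hg : g ∈ edge z k) : segment ℝ a g ∩ edge z k ⊆ {g} := by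
  have hcross := cross_ne_zero_of_visible h ha hx hxz hax
  obtain ⟨t, -, rfl⟩ := mem_segment_iff_exists_ofReal_mul.1 hx
  have hdir : cross (z (k + 1) - z k) (z (k + 1) - z k) = 0 := cross_self _
  refine segment_inter_segment_subset_of_map_eq (f := cross (z (k + 1) - z k)) ?_ ?_ hg
  · rw [map_sub] at hdir
    exact (sub_eq_zero.1 hdir).symm
  · rwa [← sub_sub, map_sub, ← Complex.real_smul, map_smul, hdir, smul_zero, sub_zero, map_sub,
      sub_ne_zero] at hcross

theorem segment_inter_body_subset {u : ℂ} (hu : segment ℝ a u ∩ edge z k ⊆ {u})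
    (hw : w ∈ segment ℝ a u) (hwz : ∀ l ≠ k, segment ℝ a w ∩ edge z l ⊆ {w}) :
    segment ℝ a w ∩ body z ⊆ {w} := by
  rintro y ⟨hya, hyz⟩
  obtain ⟨l, hyl⟩ := mem_iUnion.1 hyz
  rcases eq_or_ne l k with rfl | hl
  · have hyu := (convex_segment a u).segment_subset (left_mem_segment ℝ a u) hw hya
    obtain rfl : y = u := hu ⟨hyu, hyl⟩
    exact ((mem_segment_iff_wbtw.1 hw).swap_right_iff.1 (mem_segment_iff_wbtw.1 hya)).symm
  · exact hwz l hl ⟨hya, hyl⟩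

-- Turn the segment `[a, u]` by letting `u` run from `x` towards `g` along the edge `k`, until it
-- first meets another edge; the nearest such meeting point can only be a vertex, since a crossing
-- in the relative interior of an edge would have been present slightly earlier.
theorem exists_sees_of_mem_edge (h : IsSimple z) (ha : a ∉ body z) (hx : x ∈ edge z k)
    (hxz : x ∉ range z) (hax : segment ℝ a x ∩ body z ⊆ {x}) (hg : g ∈ edge z k)
    (hgj : g ∈ edge z j) (hj : j ≠ k) :
    ∃ m, Sees z a m ∧ ∃ u ∈ segment ℝ x g, z m ∈ segment ℝ a u := by
  have := h.neZero
  set F : Set ℂ := ⋃ l ∈ ({k}ᶜ : Set (ZMod n)), edge z l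
  have hFclosed : IsClosed F := (toFinite _).isClosed_biUnion fun l _ ↦ isClosed_edge z l
  have hmemF : ∀ {y l}, l ≠ k → y ∈ edge z l → y ∈ F := fun hl hy ↦ mem_biUnion hl hy
  obtain ⟨u, hu, hmeet, hfreq⟩ := exists_mem_segment_frequently_disjoint hFclosed
    (not_disjoint_iff.2 ⟨g, right_mem_segment ℝ a g, hmemF hj hgj⟩) x
  have huk : u ∈ edge z k := (convex_segment _ _).segment_subset hx hg hu
  obtain ⟨w, ⟨hwu, hwF⟩, hfirst⟩ := exists_mem_segment_inter_subset_singleton hFclosed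
    (not_disjoint_iff_nonempty_inter.1 hmeet)
  obtain ⟨l, hl, hwl⟩ := mem_iUnion₂.1 hwF
  have haw : segment ℝ a w ∩ body z ⊆ {w} := segment_inter_body_subset
    (segment_inter_edge_subset_of_visible h ha hx hxz hax huk) hwu
    fun m hm y hy ↦ hfirst ⟨hy.1, hmemF hm hy.2⟩
  suffices hwz : w ∈ range z by
    obtain ⟨m, rfl⟩ := hwz
    exact ⟨m, ⟨ha, haw⟩, u, hu, hwu⟩
  by_contra hwz
  have hwk : w ∉ edge z k := fun hwk ↦ (h.edge_inter_edge_subset hl).elim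
    (fun hsub ↦ hwz ⟨_, (hsub ⟨hwl, hwk⟩).symm⟩) (fun hsub ↦ hwz ⟨_, (hsub ⟨hwl, hwk⟩).symm⟩)
  have hne : w ≠ u := fun hwu ↦ hwk (hwu ▸ huk)
  rcases hfreq with rfl | hfreq
  · exact hne (hax ⟨hwu, edge_subset_body z l hwl⟩)
  · have hwa : a ≠ w := fun haw ↦ ha (haw ▸ edge_subset_body z l hwl)
    have hev := eventually_not_disjoint_segment (mem_openSegment_of_ne_left_right hwa hne.symm hwu)
      (mem_openSegment_of_mem_edge hwl hwz) (cross_ne_zero_of_visible h ha hwl hwz haw)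
    obtain ⟨u', hdisj, hndisj⟩ := (hfreq.and_eventually hev).exists
    exact hndisj (hdisj.mono_right fun y hy ↦ hmemF hl hy)

theorem exists_sees_of_map_lt_map (h : IsSimple z) (ha : a ∉ body z) {f : ℂ →L[ℝ] ℝ}
    (hf : f a < f (z i)) : ∃ m, Sees z a m ∧ f a < f (z m) := by
  have := h.neZero
  have := h.nontrivial
  have hlt : ∀ {u y}, f a < f u → y ∈ segment ℝ a u → y ∈ body z → f a < f y :=
    fun hu hy hyz ↦ map_lt_map_of_mem_segment hu hy fun hya ↦ ha (hya ▸ hyz)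
  obtain ⟨x, ⟨hxi, hxz⟩, hax⟩ := exists_mem_segment_inter_subset_singleton
    (isCompact_body z).isClosed ⟨z i, right_mem_segment ℝ a (z i), mem_body z i⟩
  have hfx : f a < f x := hlt hf hxi hxz
  by_cases hxv : x ∈ range z
  · obtain ⟨m, rfl⟩ := hxv
    exact ⟨m, ⟨ha, hax⟩, hfx⟩
  obtain ⟨k, hxk⟩ := mem_iUnion.1 hxz
  obtain ⟨g, j, hg, hgj, hj, hfg⟩ : ∃ g j, g ∈ edge z k ∧ g ∈ edge z j ∧ j ≠ k ∧ f a < f g := by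
    by_contra! hle
    have hk := hle (z k) (k - 1) (mem_edge z k) (mem_edge_sub_one z k) (by simp)
    have hk1 := hle (z (k + 1)) (k + 1) (right_mem_segment ..) (mem_edge z _) (by simp)
    exact hfx.not_ge ((convex_halfSpace_le f.isLinear (f a)).segment_subset hk hk1 hxk)
  obtain ⟨m, hm, u, hu, hmu⟩ := exists_sees_of_mem_edge h ha hxk hxv hax hg hgj hj
  have hfu : f a < f u := (convex_halfSpace_gt f.isLinear (f a)).segment_subset hfx hfg hu
  exact ⟨m, hm, hlt hfu hmu (mem_body z m)⟩

theorem exists_cross_ne_zero (h : IsSimple z) (a : ℂ) (hw : w ≠ 0) :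
    ∃ m, cross w (z m - a) ≠ 0 := by
  have := h.neZero
  by_contra! hall
  choose r hr using fun m ↦ (cross_eq_zero_iff hw).1 (hall m)
  obtain ⟨m, hm⟩ := Finite.exists_min r
  have hsub : ∀ l, z l - z m = (r l - r m : ℝ) * w := fun l ↦ by
    push_cast
    linear_combination hr l - hr m
  have hinter : segment ℝ (z m) (z (m - 1)) ∩ segment ℝ (z m) (z (m + 1)) ⊆ {z m} := by
    rw [← edge_sub_one]
    exact (h.edge_sub_one_inter_edge m).subset
  refine neg_notMem_slitPlane_iff.2 ⟨(r (m - 1) - r m) / (r (m + 1) - r m), ?_, ?_⟩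
    ((neg_div_mem_slitPlane_iff (h.apply_sub_one_ne m) (h.apply_add_one_ne m)).2 hinter)
  · exact div_nonneg (sub_nonneg.2 (hm _)) (sub_nonneg.2 (hm _))
  · rw [hsub, hsub, mul_div_mul_right _ _ hw, Complex.ofReal_div]

theorem exists_sees_cross_ne_zero (h : IsSimple z) (ha : a ∉ body z) (hw : w ≠ 0) :
    ∃ m, Sees z a m ∧ cross w (z m - a) ≠ 0 := by
  obtain ⟨i, hi⟩ := exists_cross_ne_zero h a hw
  simp only [map_sub, sub_ne_zero] at hi ⊢
  rcases hi.lt_or_gt with hi | hi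
  · obtain ⟨m, hm, hlt⟩ :=
      exists_sees_of_map_lt_map h ha (f := -cross w) (i := i) (by simpa using hi)
    exact ⟨m, hm, by simpa using hlt.ne'⟩
  · obtain ⟨m, hm, hlt⟩ := exists_sees_of_map_lt_map h ha hi
    exact ⟨m, hm, hlt.ne'⟩

theorem map_nonneg_of_forall_sees (h : IsSimple z) (ha : a ∉ body z) {f : ℂ →L[ℝ] ℝ}
    (hf : ∀ m, Sees z a m → 0 ≤ f (z m - a)) (m : ZMod n) : 0 ≤ f (z m - a) := by
  by_contra! hm
  obtain ⟨l, hl, hlt⟩ := exists_sees_of_map_lt_map h ha (f := -f) (i := m) (by simpa using hm)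
  exact (hf l hl).not_gt (by simpa using hlt)

-- All vertices lie in the cone spanned by the two visible ones.
theorem notMem_convexHull_of_forall_sees (h : IsSimple z) (ha : a ∉ body z)
    (hcross : 0 < cross (z i - a) (z j - a)) (hij : ∀ m, Sees z a m → m = i ∨ m = j) :
    a ∉ convexHull ℝ (range z) := by
  have := h.neZero
  have hi : ∀ m, 0 ≤ cross (z i - a) (z m - a) := map_nonneg_of_forall_sees h ha fun m hm ↦ by
    rcases hij m hm with rfl | rfl
    · rw [cross_self]
    · exact hcross.le
  have hj : ∀ m, 0 ≤ (-cross (z j - a)) (z m - a) := map_nonneg_of_forall_sees h ha fun m hm ↦ by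
    rcases hij m hm with rfl | rfl
    · rw [neg_apply, ← cross_swap]
      exact hcross.le
    · rw [neg_apply, cross_self, neg_zero]
  refine notMem_convexHull_range_iff.2 ⟨cross (z i - a) - cross (z j - a), fun m ↦ ?_⟩
  rw [← sub_pos, ← map_sub, sub_apply, sub_eq_add_neg, ← neg_apply]
  refine (add_nonneg (hi m) (hj m)).lt_of_ne' fun h0 ↦ ?_
  obtain ⟨hi0, hj0⟩ := (add_eq_zero_iff_of_nonneg (hi m) (hj m)).1 h0
  have hcyclic := cross_cyclic (z i - a) (z j - a) (z m - a)
  rw [neg_apply, neg_eq_zero] at hj0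
  rw [cross_swap (z m - a), hi0, hj0, neg_zero, Complex.ofReal_zero, zero_mul, zero_mul, add_zero,
    add_zero, mul_eq_zero, Complex.ofReal_eq_zero, sub_eq_zero] at hcyclic
  exact hcyclic.elim hcross.ne' fun hma ↦ ha (hma ▸ mem_body z m)

theorem exists_sees_sees_cross_pos (h : IsSimple z) (ha : a ∉ body z) :
    ∃ i j, Sees z a i ∧ Sees z a j ∧ 0 < cross (z i - a) (z j - a) := by
  obtain ⟨i, hi, -⟩ := exists_sees_cross_ne_zero h ha one_ne_zero
  obtain ⟨j, hj, hij⟩ := exists_sees_cross_ne_zero h ha (sub_ne_zero.2 hi.ne.symm)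
  rcases hij.lt_or_gt with hneg | hpos
  · exact ⟨j, i, hj, hi, by rwa [cross_swap, neg_pos]⟩
  · exact ⟨i, j, hi, hj, hpos⟩

theorem two_le_ncard_setOf_sees (h : IsSimple z) (ha : a ∉ body z) :
    2 ≤ {m | Sees z a m}.ncard := by
  have := h.neZero
  obtain ⟨i, j, hi, hj, hpos⟩ := exists_sees_sees_cross_pos h ha
  exact (one_lt_ncard (toFinite _)).2 ⟨i, hi, j, hj, by rintro rfl; simp [cross_self] at hpos⟩

theorem three_le_ncard_setOf_sees (h : IsSimple z) (ha : a ∉ body z)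
    (hull : a ∈ convexHull ℝ (range z)) : 3 ≤ {m | Sees z a m}.ncard := by
  have := h.neZero
  obtain ⟨i, j, hi, hj, hpos⟩ := exists_sees_sees_cross_pos h ha
  obtain ⟨m, hm, hmi, hmj⟩ : ∃ m, Sees z a m ∧ m ≠ i ∧ m ≠ j := by
    by_contra! hij
    exact notMem_convexHull_of_forall_sees h ha hpos
      (fun m hm ↦ or_iff_not_imp_left.2 (hij m hm)) hull
  have hij : i ≠ j := by rintro rfl; simp [cross_self] at hpos
  exact (two_lt_ncard (toFinite _)).2 ⟨i, hi, j, hj, m, hm, hij, hmi.symm, hmj.symm⟩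

end Visible

/-! ### Counting visible vertices -/

section Counting

variable {n : ℕ}

/-- The vertices of the polygon `z` seen from some point which a polygonal path of `k` segments
joins to `a` in the complement of the polygon. -/
def visible (z : ZMod n → ℂ) (a : ℂ) (k : ℕ) : Set (ZMod n) :=
  {i | ∃ y, JoinedBySegments (body z)ᶜ a k y ∧ Sees z y i}

variable [NeZero n]

theorem eq_univ_of_forall_add_one_mem {A : Set (ZMod n)} (hA : A.Nonempty)
    (hadd : ∀ i ∈ A, i + 1 ∈ A) : A = univ := by
  obtain ⟨i, hi⟩ := hA
  have hnat (k : ℕ) : i + k ∈ A := by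
    induction k with
    | zero => simpa using hi
    | succ k ih => simpa [add_assoc] using hadd _ ih
  refine eq_univ_of_forall fun j ↦ ?_
  simpa using hnat (j - i).val

theorem exists_mem_add_one_notMem {A : Set (ZMod n)} (hA : A.Nonempty) (huniv : A ≠ univ) :
    ∃ i ∈ A, i + 1 ∉ A := by
  by_contra! hadd
  exact huniv (eq_univ_of_forall_add_one_mem hA hadd)

theorem min_le_ncard_of_forall_mem_add_sub {A B : Set (ZMod n)} (hA : A.Nonempty) (hAB : A ⊆ B)
    (hadd : ∀ i ∈ A, i + 1 ∈ B) (hsub : ∀ i ∈ A, i - 1 ∈ B) : min n (A.ncard + 2) ≤ B.ncard := by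
  rcases eq_or_ne B univ with rfl | hB
  · simp [ncard_univ]
  have hAuniv : A ≠ univ := fun hA' ↦ hB (univ_subset_iff.1 (hA' ▸ hAB))
  obtain ⟨i, hiA, hi⟩ := exists_mem_add_one_notMem hA hAuniv
  obtain ⟨j, hj, hjA⟩ := exists_mem_add_one_notMem (nonempty_compl.2 hAuniv)
    (mt compl_univ_iff.1 hA.ne_empty)
  rw [notMem_compl_iff] at hjA
  have hjB : j ∈ B := by simpa using hsub _ hjA
  have hne : insert (i + 1) A ≠ B := by
    rintro rfl
    obtain rfl : j = i + 1 := hjB.resolve_right hj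
    refine hB (eq_univ_of_forall_add_one_mem (insert_nonempty _ _) ?_)
    rintro m (rfl | hm)
    · exact .inr hjA
    · exact hadd m hm
  have hlt := ncard_lt_ncard ((insert_subset (hadd i hiA) hAB).ssubset_of_ne hne)
  rw [ncard_insert_of_notMem hi] at hlt
  omega

variable {z : ZMod n → ℂ} {a b : ℂ}

theorem min_le_ncard_visible (h : IsSimple z) (ha : a ∉ body z) (k : ℕ) :
    min n (2 * k + 2) ≤ (visible z a k).ncard := by
  induction k with
  | zero => simpa [visible, JoinedBySegments] using .inr (two_le_ncard_setOf_sees h ha)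
  | succ k ih =>
    have hpos : 0 < (visible z a k).ncard := by
      have := h.three_le
      omega
    have hgrow : min n ((visible z a k).ncard + 2) ≤ (visible z a (k + 1)).ncard := by
      refine min_le_ncard_of_forall_mem_add_sub (nonempty_of_ncard_ne_zero hpos.ne') ?_ ?_ ?_
      · rintro i ⟨y, hy, hs⟩
        exact ⟨y, ⟨y, hy, by simpa using hs.1⟩, hs⟩
      · rintro i ⟨y, hy, hs⟩
        obtain ⟨q, hyq, hq⟩ := hs.exists_sees_add_one h
        exact ⟨q, ⟨y, hy, hyq.subset_compl_right⟩, hq⟩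
      · rintro i ⟨y, hy, hs⟩
        obtain ⟨q, hyq, hq⟩ := hs.exists_sees_sub_one h
        exact ⟨q, ⟨y, hy, hyq.subset_compl_right⟩, hq⟩
    omega

theorem exists_mem_visible_of_three_le (h : IsSimple z) (ha : a ∉ body z)
    (hb : 3 ≤ {i | Sees z b i}.ncard) {k : ℕ} (hk : n ≤ 2 * k + 4) :
    ∃ i ∈ visible z a k, Sees z b i := by
  by_contra! hdisj
  have hunion := ncard_union_eq (s := visible z a k) (t := {i | Sees z b i})
    (disjoint_left.2 hdisj)
  have hle := ncard_le_card (visible z a k ∪ {i | Sees z b i})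
  have hvis := min_le_ncard_visible h ha k
  rw [Nat.card_zmod] at hle
  omega

theorem joinedBySegments_of_three_le (h : IsSimple z) (ha : a ∉ body z)
    (hb : 3 ≤ {i | Sees z b i}.ncard) (hw : windingAngle z a = windingAngle z b) :
    JoinedBySegments (body z)ᶜ a ((n + 1) / 2) b := by
  obtain ⟨k, hk⟩ : ∃ k, (n + 1) / 2 = k + 2 := ⟨(n + 1) / 2 - 2, by have := h.three_le; omega⟩
  obtain ⟨i, ⟨y, hay, hy⟩, hbi⟩ := exists_mem_visible_of_three_le h ha hb (k := k) (by omega)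
  obtain ⟨q, hyq, hbq⟩ :=
    hy.exists_common hbi h ((windingAngle_eq_of_joinedBySegments hay).symm.trans hw)
  rw [hk]
  exact ⟨q, ⟨y, hay, hyq.subset_compl_right⟩, segment_symm ℝ b q ▸ hbq.subset_compl_right⟩

theorem exists_joinedBySegments_of_windingAngle_eq (h : IsSimple z) (ha : a ∉ body z)
    (hb : b ∉ body z) (hw : windingAngle z a = windingAngle z b) :
    ∃ k ≤ (n + 1) / 2, JoinedBySegments (body z)ᶜ a k b := by
  by_cases hb' : b ∈ convexHull ℝ (range z)
  · exact ⟨_, le_rfl, joinedBySegments_of_three_le h ha (three_le_ncard_setOf_sees h hb hb') hw⟩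
  by_cases ha' : a ∈ convexHull ℝ (range z)
  · have hba := joinedBySegments_of_three_le h hb (three_le_ncard_setOf_sees h ha ha') hw.symm
    exact ⟨_, le_rfl, hba.symm⟩
  · have hn := h.three_le
    exact ⟨2, by omega, joinedBySegments_two_of_notMem_convexHull (by simp) ha' hb'⟩

end Counting

/-! ### Polygons in the Euclidean plane -/

section Plane

variable {n : ℕ} {p : ZMod n → Plane} {a b : Plane} {k : ℕ}

/-- The isometric identification of the Euclidean plane with `ℂ`, in which angles are measured. -/
noncomputable def planeToComplex : Plane ≃ₗᵢ[ℝ] ℂ := Complex.orthonormalBasisOneI.repr.symm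

theorem isSimple_planeToComplex_comp (hP : IsSimplePolygon p) :
    IsSimple (fun i ↦ planeToComplex (p i)) :=
  IsSimple.map (f := planeToComplex.toLinearEquiv.toLinearMap) planeToComplex.injective
    ⟨hP.three_le, hP.inj, hP.consec, hP.nonconsec⟩

theorem body_planeToComplex_comp (p : ZMod n → Plane) :
    body (fun i ↦ planeToComplex (p i)) = planeToComplex '' polyBody p :=
  body_map planeToComplex.toLinearEquiv.toLinearMap p

theorem planeToComplex_mem_body :
    planeToComplex a ∈ body (fun i ↦ planeToComplex (p i)) ↔ a ∈ polyBody p := by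
  rw [body_planeToComplex_comp, planeToComplex.injective.mem_set_image]

theorem polyPath_of_joinedBySegments (ha : a ∉ polyBody p)
    (h : JoinedBySegments (body fun i ↦ planeToComplex (p i))ᶜ (planeToComplex a) k
      (planeToComplex b)) :
    PolyPath (connectedComponentIn (polyBody p)ᶜ a) a b k := by
  have hpre := h.image planeToComplex.symm.toLinearEquiv.toLinearMap
  have hbody : planeToComplex.symm '' (body fun i ↦ planeToComplex (p i))ᶜ = (polyBody p)ᶜ := by
    rw [body_planeToComplex_comp, ← image_compl_eq planeToComplex.bijective, image_image]
    simp
  have hab : JoinedBySegments (polyBody p)ᶜ a k b := by simpa [hbody] using hpre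
  exact (hab.inConnectedComponent ha).2.polyPath

theorem windingAngle_eq_zero_of_mem_extP [NeZero n] (ha : a ∈ extP (polyBody p)) :
    windingAngle (fun i ↦ planeToComplex (p i)) (planeToComplex a) = 0 := by
  obtain ⟨hap, hunbdd⟩ := ha
  refine windingAngle_eq_zero_of_not_isBounded
    (S := planeToComplex '' connectedComponentIn (polyBody p)ᶜ a)
    (isPreconnected_connectedComponentIn.image _ planeToComplex.continuous.continuousOn) ?_
    (fun hbdd ↦ hunbdd ?_) (mem_image_of_mem _ (mem_connectedComponentIn hap))
  · rintro _ ⟨_, hx, rfl⟩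
    exact planeToComplex_mem_body.not.2 (connectedComponentIn_subset _ _ hx)
  · simpa [image_image] using planeToComplex.symm.lipschitz.isBounded_image hbdd

theorem connectedComponentIn_subset_extP {P : Set Plane} (ha : a ∈ extP P) :
    connectedComponentIn Pᶜ a ⊆ extP P := fun _ hx ↦
  ⟨connectedComponentIn_subset _ _ hx, connectedComponentIn_eq hx ▸ ha.2⟩

end Plane

end ClosedPolygon

open ClosedPolygon

theorem stmt17_general {n : ℕ} [NeZero n] (p : ZMod n → Plane) (hP : IsSimplePolygon p)
    {a b : Plane} (ha : a ∉ polyBody p) (hb : b ∉ polyBody p)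
    (hw : windingAngle (fun i ↦ planeToComplex (p i)) (planeToComplex a) =
      windingAngle (fun i ↦ planeToComplex (p i)) (planeToComplex b)) :
    ∃ k ≤ (n + 1) / 2, PolyPath (connectedComponentIn (polyBody p)ᶜ a) a b k := by
  obtain ⟨k, hk, hab⟩ := exists_joinedBySegments_of_windingAngle_eq
    (isSimple_planeToComplex_comp hP) (planeToComplex_mem_body.not.2 ha)
    (planeToComplex_mem_body.not.2 hb) hw
  exact ⟨k, hk, polyPath_of_joinedBySegments ha hab⟩

theorem stmt17 {n : ℕ} (p : ZMod n → Plane) (hP : IsSimplePolygon p) :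
    ∀ a ∈ extP (polyBody p), ∀ b ∈ extP (polyBody p),
      ∃ k ≤ (n + 1) / 2, PolyPath (extP (polyBody p)) a b k := by
  intro a ha b hb
  have : NeZero n := (isSimple_planeToComplex_comp hP).neZero
  obtain ⟨k, hk, x, hxa, hxb, hx⟩ := stmt17_general p hP ha.1 hb.1
    ((windingAngle_eq_zero_of_mem_extP ha).trans (windingAngle_eq_zero_of_mem_extP hb).symm)
  exact ⟨k, hk, x, hxa, hxb, fun i ↦ (hx i).trans (connectedComponentIn_subset_extP ha)⟩
end

section
/- Let P be a simple closed n-gon in ℝ² with n ≥ 6, and let a, b ∈ int P be points that do not see a common vertex of P via int P. Then there exist vertices a', b' of P such that a sees a' via int P, b sees b' via int P, and a' and b' are at most ⌊n/2⌋ − 2 edges apart along P. -/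
open Set Metric

/-!
An interior point `a` sees a vertex in every open half-plane bounded by a line through `a`: shoot a
ray into the half-plane; if it first meets an edge in its relative interior, turn it towards an
endpoint of that edge lying in the half-plane until another edge blocks it. What `a` sees at that
moment is a vertex, since an edge blocking the ray in its relative interior would have blocked an
earlier one. Two vectors never meet all open half-planes, so `a` sees at least three vertices. On
the cycle of length `n` a nonempty set of `m` vertices has at least `min n (m + 2 * k)` vertices
within distance `k`, and `3 + 3 + 2 * (⌊n / 2⌋ - 2) > n` forces the vertices seen from `a` and
from `b` within distance `⌊n / 2⌋ - 2` of each other.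
-/

open Filter Topology AffineMap
open scoped Pointwise

section CyclicSets

variable {n : ℕ}

lemma card_lt_card_union_image_add_one [NeZero n] {A : Finset (ZMod n)} (hA : A.Nonempty)
    (hA' : A.card < n) : A.card < (A ∪ A.image (· + 1)).card := by
  refine Finset.card_lt_card
    (Finset.ssubset_iff_subset_ne.2 ⟨Finset.subset_union_left, fun h => ?_⟩)
  have hsucc : ∀ x ∈ A, x + 1 ∈ A := fun x hx =>
    h ▸ Finset.mem_union_right _ (Finset.mem_image_of_mem _ hx)
  obtain ⟨x, hx⟩ := hA
  have hadd (k : ℕ) : x + k ∈ A := by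
    induction k with
    | zero => simpa using hx
    | succ k ih => simpa [add_assoc] using hsucc _ ih
  have huniv : A = Finset.univ := Finset.eq_univ_of_forall fun y => by
    simpa using hadd (y - x).val
  simp [huniv, ZMod.card] at hA'

/-- The forward `k`-neighbourhood of `A` on the cycle `ZMod n`. -/
def forwardThickening (A : Finset (ZMod n)) (k : ℕ) : Finset (ZMod n) :=
  A + (Finset.range (k + 1)).image Nat.cast

lemma mem_forwardThickening {A : Finset (ZMod n)} {k : ℕ} {x : ZMod n} :
    x ∈ forwardThickening A k ↔ ∃ i ∈ A, ∃ e ≤ k, i + (e : ZMod n) = x := by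
  simp [forwardThickening, Finset.mem_add]

lemma min_card_add_le_card_forwardThickening [NeZero n] {A : Finset (ZMod n)} (hA : A.Nonempty)
    (k : ℕ) : min n (A.card + k) ≤ (forwardThickening A k).card := by
  induction k with
  | zero => simp [forwardThickening]
  | succ k ih =>
    set B := forwardThickening A k
    have hBne : B.Nonempty := hA.imp fun x hx =>
      mem_forwardThickening.2 ⟨x, hx, 0, k.zero_le, by simp⟩
    have hsub : B ∪ B.image (· + 1) ⊆ forwardThickening A (k + 1) := by
      simp only [Finset.union_subset_iff, Finset.image_subset_iff]
      refine ⟨fun x hx => ?_, fun x hx => ?_⟩ <;>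
        obtain ⟨i, hi, e, he, rfl⟩ := mem_forwardThickening.1 hx
      · exact mem_forwardThickening.2 ⟨i, hi, e, by lia, rfl⟩
      · exact mem_forwardThickening.2 ⟨i, hi, e + 1, by lia, by push_cast; ring⟩
    have hcard := Finset.card_le_card hsub
    have hmono := Finset.card_le_card (Finset.subset_union_left : B ⊆ B ∪ B.image (· + 1))
    have hgrow := card_lt_card_union_image_add_one hBne
    lia

lemma exists_mem_mem_cyclic_dist_le [NeZero n] {A B : Set (ZMod n)} (hA : A.Nonempty)
    (hB : B.Nonempty) {k : ℕ} (hk : n < A.ncard + B.ncard + 2 * k) :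
    ∃ i ∈ A, ∃ j ∈ B, ∃ d ≤ k, j = i + (d : ZMod n) ∨ i = j + (d : ZMod n) := by
  lift A to Finset (ZMod n) using A.toFinite
  lift B to Finset (ZMod n) using B.toFinite
  simp only [Finset.coe_nonempty, ncard_coe_finset] at hA hB hk
  have hmeet : (forwardThickening A (2 * k) ∩ B.image (· + (k : ZMod n))).Nonempty := by
    refine Finset.inter_nonempty_of_card_lt_card_add_card (Finset.subset_univ _)
      (Finset.subset_univ _) ?_
    rw [Finset.card_univ, ZMod.card, Finset.card_image_of_injective _ (add_left_injective _)]
    have := min_card_add_le_card_forwardThickening hA (2 * k)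
    have := hB.card_pos
    lia
  obtain ⟨x, hx⟩ := hmeet
  simp only [Finset.mem_inter, Finset.mem_image, mem_forwardThickening] at hx
  obtain ⟨⟨i, hi, e, he, hie⟩, j, hj, hjk⟩ := hx
  have hij : i + (e : ZMod n) = j + k := hie.trans hjk.symm
  rcases le_total k e with hke | hek
  · refine ⟨i, hi, j, hj, e - k, by lia, Or.inl ?_⟩
    rw [Nat.cast_sub hke, ← add_sub_assoc, hij, add_sub_cancel_right]
  · refine ⟨i, hi, j, hj, k - e, by lia, Or.inr ?_⟩
    rw [Nat.cast_sub hek, ← add_sub_assoc, ← hij, add_sub_cancel_right]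

end CyclicSets

lemma finrank_lt_card_of_forall_exists_inner_pos {E : Type*} [NormedAddCommGroup E]
    [InnerProductSpace ℝ E] [FiniteDimensional ℝ E] [Nontrivial E] {S : Finset E}
    (hS : ∀ u : E, u ≠ 0 → ∃ v ∈ S, 0 < inner ℝ u v) : Module.finrank ℝ E < S.card := by
  classical
  by_contra! hcard
  obtain ⟨u₀, hu₀⟩ := exists_ne (0 : E)
  obtain ⟨v₀, hv₀, -⟩ := hS u₀ hu₀
  have hspan : Submodule.span ℝ (S.erase v₀ : Set E) ≠ ⊤ := fun htop => by
    have := finrank_span_finset_le_card (R := ℝ) (S.erase v₀)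
    rw [Set.finrank, htop, finrank_top, Finset.card_erase_of_mem hv₀] at this
    have := Finset.card_pos.2 ⟨v₀, hv₀⟩
    lia
  obtain ⟨u, hu, hu0⟩ := Submodule.exists_mem_ne_zero_of_ne_bot
    (mt Submodule.orthogonal_eq_bot_iff.1 hspan)
  have horth : ∀ v ∈ S, v ≠ v₀ → inner ℝ u v = 0 := fun v hv hne =>
    (Submodule.mem_orthogonal' _ u).1 hu v
      (Submodule.subset_span (Finset.mem_coe.2 (Finset.mem_erase.2 ⟨hne, hv⟩)))
  wlog hle : inner ℝ u v₀ ≤ 0 generalizing u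
  · refine this (-u) (neg_mem hu) (neg_ne_zero.2 hu0) (fun v hv hne => ?_) ?_
    · rw [inner_neg_left, horth v hv hne, neg_zero]
    · rw [inner_neg_left]
      linarith
  obtain ⟨v, hv, hpos⟩ := hS u hu0
  by_cases hne : v = v₀
  · exact hpos.not_ge (hne ▸ hle)
  · exact hpos.ne' (horth v hv hne)

section SweepingRay

variable {E : Type*} [NormedAddCommGroup E] [NormedSpace ℝ E]

lemma exists_mul_neg_of_eventually {c : ℝ} (hc : c ≠ 0) {Q : ℝ → Prop} (hQ : ∀ᶠ τ in 𝓝 0, Q τ) :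
    ∃ τ, c * τ < 0 ∧ Q τ := by
  have htends : Tendsto (fun δ : ℝ => -c * δ) (𝓝[>] 0) (𝓝 0) := by
    have : Continuous fun δ : ℝ => -c * δ := by fun_prop
    simpa using (this.tendsto 0).mono_left nhdsWithin_le_nhds
  obtain ⟨δ, hδ, hpos⟩ := ((htends.eventually hQ).and self_mem_nhdsWithin).exists
  refine ⟨-c * δ, ?_, hδ⟩
  have : 0 < c ^ 2 * δ := mul_pos (by positivity) hpos
  linarith

lemma eventually_add_smul_mem_segment {q q' x : E} (hx : x ∈ openSegment ℝ q q') :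
    ∀ᶠ τ : ℝ in 𝓝 0, x + τ • (q' - q) ∈ segment ℝ q q' := by
  rw [openSegment_eq_image'] at hx
  obtain ⟨l, hl, rfl⟩ := hx
  have hcont : Continuous fun τ : ℝ => l + τ := by fun_prop
  have hmem : ∀ᶠ τ : ℝ in 𝓝 0, l + τ ∈ Ioo (0 : ℝ) 1 :=
    hcont.continuousAt.eventually_mem (by simpa using Ioo_mem_nhds hl.1 hl.2)
  filter_upwards [hmem] with τ hτ
  rw [segment_eq_image']
  exact ⟨l + τ, Ioo_subset_Icc_self hτ, by module⟩

lemma sub_ne_smul_sub_of_isVisible {P : Set E} {a x q q' : E} (hvis : IsVisible ℝ P a x)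
    (hax : a ≠ x) (hsub : segment ℝ q q' ⊆ P) (hx : x ∈ openSegment ℝ q q') (hq : q ≠ q')
    (c : ℝ) : q' - q ≠ c • (x - a) := by
  intro hc
  have hc0 : c ≠ 0 := by
    rintro rfl
    exact hq (sub_eq_zero.1 (by simpa using hc)).symm
  have hcont : Continuous fun τ : ℝ => 1 + c * τ := by fun_prop
  have hpos : ∀ᶠ τ : ℝ in 𝓝 0, 0 < 1 + c * τ :=
    hcont.continuousAt.eventually (lt_mem_nhds (by simp))
  obtain ⟨τ, hneg, hmem, hτ⟩ :=
    exists_mul_neg_of_eventually hc0 ((eventually_add_smul_mem_segment hx).and hpos)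
  refine (isVisible_iff_lineMap hax).1 hvis (1 + c * τ) ⟨hτ, by linarith⟩ (hsub ?_)
  have heq : lineMap a x (1 + c * τ) = x + τ • (q' - q) := by
    rw [hc, lineMap_apply_module']
    module
  rwa [heq]

lemma exists_sub_eq_smul_of_mem_openSegment {q q' x y : E} (hx : x ∈ openSegment ℝ q q')
    (hy : y ∈ segment ℝ q q') : ∃ c : ℝ, y - x = c • (q' - x) := by
  rw [openSegment_eq_image'] at hx
  rw [segment_eq_image'] at hy
  obtain ⟨m, hm, rfl⟩ := hx
  obtain ⟨l, -, rfl⟩ := hy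
  refine ⟨(l - m) / (1 - m), ?_⟩
  have hm1 : 1 - m ≠ 0 := (sub_pos.2 hm.2).ne'
  match_scalars <;> field

lemma linearIndependent_of_isVisible {P : Set E} {a x q q' : E} (hvis : IsVisible ℝ P a x)
    (hax : a ≠ x) (hsub : segment ℝ q q' ⊆ P) (hx : x ∈ openSegment ℝ q q') (hq : q ≠ q') :
    LinearIndependent ℝ ![x - a, q' - x] := by
  rw [LinearIndependent.pair_iff' (sub_ne_zero.2 hax.symm)]
  intro c hc
  obtain ⟨m, hm⟩ := exists_sub_eq_smul_of_mem_openSegment hx (left_mem_segment ℝ q q')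
  refine sub_ne_smul_sub_of_isVisible hvis hax hsub hx hq ((1 - m) * c) ?_
  rw [mul_smul, hc, sub_smul, one_smul, ← hm]
  module

lemma eq_one_of_lineMap_mem_segment {a x q q' : E} {s r : ℝ}
    (hind : LinearIndependent ℝ ![x - a, q' - x]) (hx : x ∈ openSegment ℝ q q')
    (hmem : lineMap a (lineMap x q' s : E) r ∈ segment ℝ q q') : r = 1 := by
  obtain ⟨c, hc⟩ := exists_sub_eq_smul_of_mem_openSegment hx hmem
  have hrel : (r - 1) • (x - a) + (r * s - c) • (q' - x) = 0 := by
    rw [sub_smul (r * s), ← hc]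
    simp only [lineMap_apply_module']
    module
  linarith [(LinearIndependent.pair_iff.1 hind _ _ hrel).1]

/-- The parameters `s` for which the segment from `a` to the point `lineMap x v s` of the side
`[x, v]` meets the obstacle `K`: sweeping the triangle `a x v` from `x` towards `v`, the ray from
`a` is obstructed at exactly these `s`. -/
def blockedParams (K : Set E) (a x v : E) : Set ℝ :=
  {s ∈ Icc 0 1 | ∃ r ∈ Icc (0 : ℝ) 1, lineMap a (lineMap x v s : E) r ∈ K}

lemma one_mem_blockedParams {K : Set E} (a x : E) {v : E} (hv : v ∈ K) :
    1 ∈ blockedParams K a x v :=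
  ⟨by simp, 1, by simp, by simpa⟩

lemma zero_notMem_blockedParams {K : Set E} {a x v : E} (hvis : IsVisible ℝ K a x) (ha : a ∉ K)
    (hx : x ∉ K) : 0 ∉ blockedParams K a x v := by
  rintro ⟨-, r, hr, hmem⟩
  rw [lineMap_apply_zero] at hmem
  have hax : a ≠ x := by
    rintro rfl
    exact ha (by simpa using hmem)
  have hr0 : r ≠ 0 := by
    rintro rfl
    exact ha (by simpa using hmem)
  have hr1 : r ≠ 1 := by
    rintro rfl
    exact hx (by simpa using hmem)
  exact (isVisible_iff_lineMap hax).1 hvis r ⟨hr.1.lt_of_ne' hr0, hr.2.lt_of_ne hr1⟩ hmem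

lemma exists_isVisible_lineMap {K : Set E} (hK : IsClosed K) {a y : E} (ha : a ∉ K) {r : ℝ}
    (hr : r ∈ Icc (0 : ℝ) 1) (hmem : lineMap a y r ∈ K) :
    ∃ t ∈ Ioc (0 : ℝ) 1, lineMap a y t ∈ K ∧ IsVisible ℝ K a (lineMap a y t) := by
  obtain ⟨z, hz, ⟨t, ht, rfl⟩, hvis⟩ := hK.exists_wbtw_isVisible hmem a
  rw [lineMap_lineMap_right] at hz hvis
  have htr : t * r ≠ 0 := fun h => ha (by simpa [h] using hz)
  exact ⟨t * r, ⟨(mul_nonneg ht.1 hr.1).lt_of_ne' htr, mul_le_one₀ ht.2 hr.1 hr.2⟩, hz, hvis⟩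

lemma exists_isLeast_blockedParams {K : Set E} (hK : IsClosed K) {a x v : E}
    (hne : (blockedParams K a x v).Nonempty) : ∃ s, IsLeast (blockedParams K a x v) s := by
  have hcont : Continuous fun sr : ℝ × ℝ => (lineMap a (lineMap x v sr.1 : E) sr.2 : E) := by
    simp only [lineMap_apply_module]
    fun_prop
  have himage : blockedParams K a x v =
      Prod.fst '' ((Icc (0 : ℝ) 1 ×ˢ Icc (0 : ℝ) 1) ∩
        (fun sr : ℝ × ℝ => (lineMap a (lineMap x v sr.1 : E) sr.2 : E)) ⁻¹' K) := by
    ext s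
    simp only [blockedParams, mem_ofPred_eq, mem_image, mem_inter_iff, mem_prod, mem_preimage,
      Prod.exists, exists_and_right, exists_eq_right]
    tauto
  refine IsCompact.exists_isLeast ?_ hne
  rw [himage]
  exact ((isCompact_Icc.prod isCompact_Icc).inter_right (hK.preimage hcont)).image continuous_fst

lemma exists_eq_smul_add_smul_of_finrank_eq_two (hE : Module.finrank ℝ E = 2) {X W : E}
    (hXW : LinearIndependent ℝ ![X, W]) (z : E) : ∃ α β : ℝ, α • X + β • W = z := by
  have htop := hXW.span_eq_top_of_card_eq_finrank (by simp [hE])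
  rw [Matrix.range_cons_cons_empty] at htop
  exact Submodule.mem_span_pair.1 (htop ▸ Submodule.mem_top)

/- If `[q, q']` crossed the first blocked ray transversally, then sliding along `[q, q']` would
reach a ray blocked even earlier. -/
lemma exists_sub_eq_smul_of_isLeast_blockedParams (hE : Module.finrank ℝ E = 2) {K : Set E}
    {a x v q q' : E} {s r : ℝ} (hind : LinearIndependent ℝ ![x - a, v - x])
    (hs : IsLeast (blockedParams K a x v) s) (hs0 : 0 < s) (hr : r ∈ Ioo (0 : ℝ) 1)
    (hsub : segment ℝ q q' ⊆ K)
    (hmem : lineMap a (lineMap x v s : E) r ∈ openSegment ℝ q q') :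
    ∃ c : ℝ, q' - q = c • (lineMap x v s - a) := by
  obtain ⟨α, β, hαβ⟩ := exists_eq_smul_add_smul_of_finrank_eq_two hE hind (q' - q)
  by_cases hc : β - s * α = 0
  · refine ⟨α, ?_⟩
    rw [← hαβ, sub_eq_zero.1 hc, lineMap_apply_module']
    module
  have hclose : ∀ᶠ τ : ℝ in 𝓝 0, 0 < r + τ * α ∧ r + τ * α < 1 ∧ 0 < r * s + τ * β := by
    have hcont₁ : ContinuousAt (fun τ : ℝ => r + τ * α) 0 := by fun_prop
    have hcont₂ : ContinuousAt (fun τ : ℝ => r * s + τ * β) 0 := by fun_prop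
    have hrs : 0 < r * s := mul_pos hr.1 hs0
    exact (hcont₁.eventually (lt_mem_nhds (by simpa using hr.1))).and
      ((hcont₁.eventually (gt_mem_nhds (by simpa using hr.2))).and
        (hcont₂.eventually (lt_mem_nhds (by simpa using hrs))))
  obtain ⟨τ, hneg, hseg, hr0, hr1, hrs⟩ :=
    exists_mul_neg_of_eventually hc ((eventually_add_smul_mem_segment hmem).and hclose)
  set s' := (r * s + τ * β) / (r + τ * α) with hs'
  have hs'_lt : s' < s := by
    rw [hs', div_lt_iff₀ hr0]
    linarith
  have hpoint : lineMap a (lineMap x v s' : E) (r + τ * α) =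
      lineMap a (lineMap x v s : E) r + τ • (q' - q) := by
    have hmul : (r + τ * α) * s' = r * s + τ * β := mul_div_cancel₀ _ hr0.ne'
    calc lineMap a (lineMap x v s' : E) (r + τ * α)
        = a + (r + τ * α) • (x - a) + ((r + τ * α) * s') • (v - x) := by
          simp only [lineMap_apply_module']
          module
      _ = lineMap a (lineMap x v s : E) r + τ • (q' - q) := by
          rw [hmul, ← hαβ]
          simp only [lineMap_apply_module']
          module
  have hblocked : s' ∈ blockedParams K a x v :=
    ⟨⟨(div_pos hrs hr0).le, hs'_lt.le.trans hs.1.1.2⟩, r + τ * α, ⟨hr0.le, hr1.le⟩,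
      hpoint ▸ hsub hseg⟩
  exact absurd (hs.2 hblocked) hs'_lt.not_ge

end SweepingRay

section Interior

variable {P : Set Plane} {a : Plane}

lemma openSegment_subset_intP_of_isVisible (ha : a ∈ intP P) {v : Plane}
    (hvis : IsVisible ℝ P a v) : openSegment ℝ a v ⊆ intP P := by
  rcases eq_or_ne a v with rfl | hav
  · simpa using ha
  have havoid : insert a (openSegment ℝ a v) ⊆ Pᶜ := by
    rw [openSegment_eq_image_lineMap]
    refine insert_subset ha.1 ?_
    rintro _ ⟨r, hr, rfl⟩
    exact (isVisible_iff_lineMap hav).1 hvis r hr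
  have hconn : IsPreconnected (insert a (openSegment ℝ a v)) :=
    (convex_openSegment a v).isPreconnected.subset_closure (subset_insert _ _)
      (insert_subset (segment_subset_closure_openSegment (left_mem_segment ℝ a v)) subset_closure)
  intro x hx
  have hcomp := hconn.subset_connectedComponentIn (mem_insert _ _) havoid (mem_insert_of_mem _ hx)
  exact ⟨havoid (mem_insert_of_mem _ hx), connectedComponentIn_eq hcomp ▸ ha.2⟩

lemma exists_add_smul_mem_of_mem_intP (ha : a ∈ intP P) {u : Plane} (hu : u ≠ 0) :
    ∃ t : ℝ, 0 ≤ t ∧ a + t • u ∈ P := by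
  by_contra! hray
  have hconn : IsPreconnected ((fun t : ℝ => a + t • u) '' Ici 0) :=
    (convex_Ici (0 : ℝ)).isPreconnected.image _ (by fun_prop)
  have hsub := hconn.subset_connectedComponentIn (x := a) (F := Pᶜ) ⟨0, by simp, by simp⟩
    (by rintro _ ⟨t, ht, rfl⟩; exact hray t ht)
  obtain ⟨R, hR⟩ := (ha.2.subset hsub).subset_closedBall a
  have hu' : 0 < ‖u‖ := norm_pos_iff.2 hu
  have hfar := hR ⟨(|R| + 1) / ‖u‖, mem_Ici.2 (by positivity), rfl⟩
  rw [mem_closedBall, dist_self_add_left, norm_smul, Real.norm_of_nonneg (by positivity),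
    div_mul_cancel₀ _ hu'.ne'] at hfar
  linarith [le_abs_self R]

lemma exists_pos_isVisible_add_smul (hP : IsClosed P) (ha : a ∈ intP P) {u : Plane}
    (hu : u ≠ 0) : ∃ t : ℝ, 0 < t ∧ a + t • u ∈ P ∧ IsVisible ℝ P a (a + t • u) := by
  obtain ⟨t₀, ht₀, hmem⟩ := exists_add_smul_mem_of_mem_intP ha hu
  obtain ⟨r, hr, hx, hvis⟩ := exists_isVisible_lineMap hP (y := a + t₀ • u) ha.1
    (right_mem_Icc.2 zero_le_one) (by simpa using hmem)
  have hpoint : lineMap a (a + t₀ • u) r = a + (r * t₀) • u := by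
    rw [lineMap_apply_module']
    module
  rw [hpoint] at hx hvis
  refine ⟨r * t₀, (mul_nonneg hr.1.le ht₀).lt_of_ne fun h => ha.1 ?_, hx, hvis⟩
  simpa [← h] using hx

end Interior

section Polygon

variable {n : ℕ} {p : ZMod n → Plane}

lemma isClosed_polyEdge (p : ZMod n → Plane) (i : ZMod n) : IsClosed (polyEdge p i) := by
  rw [polyEdge, ← convexHull_pair]
  exact ((Set.toFinite _).isCompact_convexHull ℝ).isClosed

lemma isClosed_polyBody [NeZero n] (p : ZMod n → Plane) : IsClosed (polyBody p) :=
  isClosed_iUnion_of_finite (isClosed_polyEdge p)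

/-- The union of the edges of the closed polygon `p` other than its `i`-th one. -/
def otherEdges (p : ZMod n → Plane) (i : ZMod n) : Set Plane :=
  ⋃ j ∈ ({i}ᶜ : Set (ZMod n)), polyEdge p j

lemma polyEdge_subset_polyBody (p : ZMod n → Plane) (i : ZMod n) :
    polyEdge p i ⊆ polyBody p :=
  subset_iUnion (polyEdge p) i

lemma polyEdge_subset_otherEdges (p : ZMod n → Plane) {i j : ZMod n} (hji : j ≠ i) :
    polyEdge p j ⊆ otherEdges p i :=
  subset_biUnion_of_mem (u := polyEdge p) (show j ∈ ({i}ᶜ : Set (ZMod n)) from hji)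

lemma otherEdges_subset_polyBody (p : ZMod n → Plane) (i : ZMod n) :
    otherEdges p i ⊆ polyBody p :=
  iUnion₂_subset fun j _ => polyEdge_subset_polyBody p j

lemma isClosed_otherEdges [NeZero n] (p : ZMod n → Plane) (i : ZMod n) :
    IsClosed (otherEdges p i) :=
  (Set.toFinite _).isClosed_biUnion fun j _ => isClosed_polyEdge p j

lemma mem_openSegment_of_mem_polyEdge {i : ZMod n} {x : Plane} (hi : x ∈ polyEdge p i)
    (hx : x ∉ range p) : x ∈ openSegment ℝ (p i) (p (i + 1)) :=
  mem_openSegment_of_ne_left_right (fun h => hx ⟨i, h⟩) (fun h => hx ⟨i + 1, h⟩) hi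

lemma isVisible_polyBody_of_isVisible_otherEdges {i : ZMod n} {a x q v : Plane} {s r : ℝ}
    (hedge : polyEdge p i = segment ℝ q v) (hind : LinearIndependent ℝ ![x - a, v - x])
    (hx : x ∈ openSegment ℝ q v) (hr : r ∈ Ioc (0 : ℝ) 1)
    (hvis : IsVisible ℝ (otherEdges p i) a (lineMap a (lineMap x v s : Plane) r)) :
    IsVisible ℝ (polyBody p) a (lineMap a (lineMap x v s : Plane) r) := by
  intro z hz hbtw
  obtain ⟨j, hj⟩ := mem_iUnion.1 hz
  by_cases hji : j = i
  · obtain ⟨t, ht, rfl⟩ := (sbtw_iff_mem_image_Ioo_and_ne.1 hbtw).1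
    rw [hji, hedge, lineMap_lineMap_right] at hj
    have htr : t * r < 1 := mul_lt_one_of_nonneg_of_lt_one_left ht.1.le ht.2 hr.2
    exact htr.ne (eq_one_of_lineMap_mem_segment hind hx hj)
  · exact hvis (polyEdge_subset_otherEdges p hji hj) hbtw

namespace IsSimplePolygon

lemma fact_one_lt (hP : IsSimplePolygon p) : Fact (1 < n) :=
  ⟨by linarith [hP.three_le]⟩

lemma mem_range_of_mem_polyEdge (hP : IsSimplePolygon p) {i j : ZMod n} (hij : i ≠ j) {x : Plane}
    (hi : x ∈ polyEdge p i) (hj : x ∈ polyEdge p j) : x ∈ range p := by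
  by_cases hji : j = i + 1
  · subst hji
    exact ⟨i + 1, ((hP.consec i).subset ⟨hi, hj⟩).symm⟩
  by_cases hij' : i = j + 1
  · subst hij'
    exact ⟨j + 1, ((hP.consec j).subset ⟨hj, hi⟩).symm⟩
  exact ((hP.nonconsec i j hij.symm hji hij').subset ⟨hi, hj⟩).elim

lemma mem_range_of_mem_polyEdge_of_mem_otherEdges (hP : IsSimplePolygon p) {i : ZMod n}
    {x : Plane} (hi : x ∈ polyEdge p i) (hx : x ∈ otherEdges p i) : x ∈ range p := by
  obtain ⟨j, hji, hj⟩ := mem_iUnion₂.1 hx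
  exact hP.mem_range_of_mem_polyEdge (Ne.symm hji) hi hj

lemma left_mem_otherEdges (hP : IsSimplePolygon p) (i : ZMod n) : p i ∈ otherEdges p i := by
  have := hP.fact_one_lt
  refine polyEdge_subset_otherEdges p (j := i - 1) (by simp) ?_
  simpa [polyEdge] using right_mem_segment ℝ (p (i - 1)) (p i)

lemma right_mem_otherEdges (hP : IsSimplePolygon p) (i : ZMod n) :
    p (i + 1) ∈ otherEdges p i := by
  have := hP.fact_one_lt
  exact polyEdge_subset_otherEdges p (by simp) (left_mem_segment ℝ _ _)

lemma vertex_ne_vertex_add_one (hP : IsSimplePolygon p) (i : ZMod n) : p i ≠ p (i + 1) := by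
  have := hP.fact_one_lt
  exact hP.inj.ne (by simp)

lemma mem_range_of_isLeast_blockedParams (hP : IsSimplePolygon p) {i : ZMod n} {a x q v : Plane}
    {s r : ℝ} (ha : a ∉ polyBody p) (hedge : polyEdge p i = segment ℝ q v)
    (hind : LinearIndependent ℝ ![x - a, v - x]) (hx : x ∈ openSegment ℝ q v)
    (hs : IsLeast (blockedParams (otherEdges p i) a x v) s) (hs0 : 0 < s)
    (hr : r ∈ Ioc (0 : ℝ) 1) (hmem : lineMap a (lineMap x v s : Plane) r ∈ otherEdges p i)
    (hvis : IsVisible ℝ (polyBody p) a (lineMap a (lineMap x v s : Plane) r)) :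
    lineMap a (lineMap x v s : Plane) r ∈ range p := by
  by_contra hnot
  have hr1 : r ≠ 1 := by
    rintro rfl
    rw [lineMap_apply_one] at hmem hnot
    refine hnot (hP.mem_range_of_mem_polyEdge_of_mem_otherEdges (i := i) ?_ hmem)
    rw [hedge]
    exact (convex_segment q v).lineMap_mem (openSegment_subset_segment ℝ q v hx)
      (right_mem_segment ℝ q v) hs.1.1
  obtain ⟨j, hji, hj⟩ := mem_iUnion₂.1 hmem
  have hj' := mem_openSegment_of_mem_polyEdge hj hnot
  obtain ⟨c, hc⟩ := exists_sub_eq_smul_of_isLeast_blockedParams finrank_euclideanSpace_fin hind hs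
    hs0 ⟨hr.1, hr.2.lt_of_ne hr1⟩ (polyEdge_subset_otherEdges p hji) hj'
  refine sub_ne_smul_sub_of_isVisible hvis (fun h => ha ?_) (polyEdge_subset_polyBody p j) hj'
    (hP.vertex_ne_vertex_add_one j) (c / r) ?_
  · exact h ▸ otherEdges_subset_polyBody p i hmem
  · rw [hc, lineMap_apply_module' a, add_sub_cancel_right, smul_smul, div_mul_cancel₀ _ hr.1.ne']

/- Turn the ray from `a` through `x` towards the endpoint `v` of the edge containing `x` until it
is blocked by another edge; what it first sees there is a vertex. -/
lemma exists_isVisible_vertex_of_mem_openSegment (hP : IsSimplePolygon p) {i : ZMod n}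
    {a x q v : Plane} (ha : a ∉ polyBody p) (hx : x ∉ range p)
    (hvis : IsVisible ℝ (polyBody p) a x) (hedge : polyEdge p i = segment ℝ q v)
    (hxqv : x ∈ openSegment ℝ q v) (hv : v ∈ otherEdges p i) :
    ∃ k, IsVisible ℝ (polyBody p) a (p k) ∧
      ∃ s ∈ Icc (0 : ℝ) 1, ∃ r : ℝ, 0 < r ∧ p k = lineMap a (lineMap x v s : Plane) r := by
  have := hP.fact_one_lt
  have hx_edge : x ∈ segment ℝ q v := openSegment_subset_segment ℝ q v hxqv
  have hx_other : x ∉ otherEdges p i := fun h =>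
    hx (hP.mem_range_of_mem_polyEdge_of_mem_otherEdges (hedge ▸ hx_edge) h)
  have hsub : segment ℝ q v ⊆ polyBody p := hedge ▸ polyEdge_subset_polyBody p i
  have hsub_other := otherEdges_subset_polyBody p i
  have ha_other : a ∉ otherEdges p i := fun h => ha (hsub_other h)
  have hqv : q ≠ v := by
    rintro rfl
    have hxq : x = q := by simpa using hxqv
    exact hx_other (hxq ▸ hv)
  have hind := linearIndependent_of_isVisible hvis (fun h => ha (h ▸ hsub hx_edge)) hsub hxqv hqv
  obtain ⟨s, hs⟩ := exists_isLeast_blockedParams (isClosed_otherEdges p i)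
    ⟨1, one_mem_blockedParams a x hv⟩
  have hs0 : s ≠ 0 := fun h =>
    zero_notMem_blockedParams (hvis.mono hsub_other) ha_other hx_other (h ▸ hs.1)
  obtain ⟨hs01, r₀, hr₀, hblock⟩ := hs.1
  obtain ⟨r, hr, hmem, hvis_other⟩ :=
    exists_isVisible_lineMap (isClosed_otherEdges p i) ha_other hr₀ hblock
  have hvis_body := isVisible_polyBody_of_isVisible_otherEdges hedge hind hxqv hr hvis_other
  obtain ⟨k, hk⟩ := hP.mem_range_of_isLeast_blockedParams ha hedge hind hxqv hs
    (hs01.1.lt_of_ne' hs0) hr hmem hvis_body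
  exact ⟨k, hk ▸ hvis_body, s, hs01, r, hr.1, hk⟩

lemma exists_isVisible_vertex_inner_pos_of_endpoint (hP : IsSimplePolygon p) {i : ZMod n}
    {a x q v u : Plane} (ha : a ∉ polyBody p) (hx : x ∉ range p)
    (hvis : IsVisible ℝ (polyBody p) a x) (hedge : polyEdge p i = segment ℝ q v)
    (hxqv : x ∈ openSegment ℝ q v) (hv : v ∈ otherEdges p i)
    (hux : 0 < inner ℝ u (x - a)) (huv : 0 < inner ℝ u (v - a)) :
    ∃ k, IsVisible ℝ (polyBody p) a (p k) ∧ 0 < inner ℝ u (p k - a) := by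
  obtain ⟨k, hk, s, hs, r, hr, hpk⟩ :=
    hP.exists_isVisible_vertex_of_mem_openSegment ha hx hvis hedge hxqv hv
  have hsplit : p k - a = r • (lineMap (x - a) (v - a) s : Plane) := by
    rw [hpk]
    simp only [lineMap_apply_module']
    module
  have hline : 0 < inner ℝ u (lineMap (x - a) (v - a) s : Plane) :=
    (convex_halfSpace_gt (innerₗ Plane u).isLinear 0).lineMap_mem hux huv hs
  exact ⟨k, hk, by rw [hsplit, inner_smul_right]; positivity⟩

lemma exists_isVisible_vertex_inner_pos (hP : IsSimplePolygon p) {a u : Plane}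
    (ha : a ∈ intP (polyBody p)) (hu : u ≠ 0) :
    ∃ k, IsVisible ℝ (polyBody p) a (p k) ∧ 0 < inner ℝ u (p k - a) := by
  have := hP.fact_one_lt
  obtain ⟨t, ht, hmem, hvis⟩ := exists_pos_isVisible_add_smul (isClosed_polyBody p) ha hu
  set x := a + t • u with hx
  have hux : 0 < inner ℝ u (x - a) := by
    rw [hx, add_sub_cancel_left, inner_smul_right]
    exact mul_pos ht (real_inner_self_pos.2 hu)
  by_cases hvertex : x ∈ range p
  · obtain ⟨k, hk⟩ := hvertex
    exact ⟨k, hk ▸ hvis, hk ▸ hux⟩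
  obtain ⟨i, hi⟩ := mem_iUnion.1 hmem
  have hopen := mem_openSegment_of_mem_polyEdge hi hvertex
  by_cases hleft : 0 < inner ℝ u (p i - a)
  · exact hP.exists_isVisible_vertex_inner_pos_of_endpoint ha.1 hvertex hvis
      (segment_symm ℝ (p i) (p (i + 1))) (openSegment_symm ℝ (p i) (p (i + 1)) ▸ hopen)
      (hP.left_mem_otherEdges i) hux hleft
  by_cases hright : 0 < inner ℝ u (p (i + 1) - a)
  · exact hP.exists_isVisible_vertex_inner_pos_of_endpoint ha.1 hvertex hvis rfl hopen
      (hP.right_mem_otherEdges i) hux hright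
  have hconv : Convex ℝ {y : Plane | inner ℝ u (y - a) ≤ 0} := by
    simp only [inner_sub_right, sub_nonpos]
    exact convex_halfSpace_le (innerₗ Plane u).isLinear (inner ℝ u a)
  exact absurd (hconv.segment_subset (not_lt.1 hleft) (not_lt.1 hright) hi) hux.not_ge

end IsSimplePolygon

/-- The indices of the vertices that `a` sees via the interior of the polygon `p`. -/
def seenVertices (p : ZMod n → Plane) (a : Plane) : Set (ZMod n) :=
  {i | openSegment ℝ a (p i) ⊆ intP (polyBody p)}

lemma IsSimplePolygon.three_le_ncard_seenVertices (hP : IsSimplePolygon p) {a : Plane}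
    (ha : a ∈ intP (polyBody p)) : 3 ≤ (seenVertices p a).ncard := by
  have := hP.fact_one_lt
  classical
  have hdirections : ∀ u : Plane, u ≠ 0 →
      ∃ v ∈ (seenVertices p a).toFinset.image (fun k => p k - a), 0 < inner ℝ u v := fun u hu => by
    obtain ⟨k, hk, hpos⟩ := hP.exists_isVisible_vertex_inner_pos ha hu
    exact ⟨_, Finset.mem_image_of_mem _
      (mem_toFinset.2 (openSegment_subset_intP_of_isVisible ha hk)), hpos⟩
  calc 3 = Module.finrank ℝ Plane + 1 := by rw [finrank_euclideanSpace_fin]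
    _ ≤ _ := finrank_lt_card_of_forall_exists_inner_pos hdirections
    _ ≤ (seenVertices p a).toFinset.card := Finset.card_image_le
    _ = (seenVertices p a).ncard := (ncard_eq_toFinset_card' _).symm

end Polygon

theorem stmt18_general {n : ℕ} (p : ZMod n → Plane) (hP : IsSimplePolygon p) (hn : 4 ≤ n)
    (a b : Plane) (ha : a ∈ intP (polyBody p)) (hb : b ∈ intP (polyBody p)) :
    ∃ i j : ZMod n, ∃ d : ℕ, d + 2 ≤ n / 2 ∧
      (j = i + (d : ZMod n) ∨ i = j + (d : ZMod n)) ∧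
      openSegment ℝ a (p i) ⊆ intP (polyBody p) ∧
      openSegment ℝ b (p j) ⊆ intP (polyBody p) := by
  have := hP.fact_one_lt
  have hA := hP.three_le_ncard_seenVertices ha
  have hB := hP.three_le_ncard_seenVertices hb
  obtain ⟨i, hi, j, hj, d, hd, hij⟩ := exists_mem_mem_cyclic_dist_le (k := n / 2 - 2)
    (nonempty_of_ncard_ne_zero (s := seenVertices p a) (by lia))
    (nonempty_of_ncard_ne_zero (s := seenVertices p b) (by lia)) (by lia)
  exact ⟨i, j, d, by lia, hij, hi, hj⟩

theorem stmt18 {n : ℕ} (p : ZMod n → Plane) (hP : IsSimplePolygon p) (hn : 6 ≤ n)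
    (a b : Plane)
    (ha : a ∈ intP (polyBody p)) (hb : b ∈ intP (polyBody p))
    (hnocommon : ¬ ∃ i : ZMod n, openSegment ℝ a (p i) ⊆ intP (polyBody p) ∧
      openSegment ℝ b (p i) ⊆ intP (polyBody p)) :
    ∃ i j : ZMod n, ∃ d : ℕ, d ≤ n / 2 - 2 ∧
      (j = i + (d : ZMod n) ∨ i = j + (d : ZMod n)) ∧
      openSegment ℝ a (p i) ⊆ intP (polyBody p) ∧
      openSegment ℝ b (p j) ⊆ intP (polyBody p) := by
  obtain ⟨i, j, d, hd, hseen⟩ := stmt18_general p hP (by lia) a b ha hb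
  exact ⟨i, j, d, by lia, hseen⟩
end
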